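/- For each t ∈ [0,1] the limit σ̂ₜ²(f) = lim_{m→∞} μ̂ₜ[(m^{−1/2} Σ_{k=0}^{m−1} f̂ₜ ∘ γₜᵏ)²] exists and equals μ̂ₜ(f̂ₜ²) + 2 Σ_{k=1}^∞ μ̂ₜ(f̂ₜ · (f̂ₜ ∘ γₜᵏ)), where the series converges absolutely (at an exponential rate). Moreover, the map [0,1] → ℝ≥0, t ↦ σ̂ₜ²(f), is uniformly continuous. -/

import Mathlib

open MeasureTheory Filter Topology Set UniformConvergence

noncomputable section

instance : Fact ((0:ℝ) < 1) := ⟨zero_lt_one⟩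

/-- The circle `𝕊 = ℝ/ℤ`. -/
abbrev Circle1 : Type := AddCircle (1 : ℝ)

/-- A `C²` expanding circle map with expansion `≥ lam` and `‖T''‖_∞ ≤ Astar`,
encoded by a lift `F : ℝ → ℝ` satisfying `F (x+1) = F x + deg`. -/
structure CM (lam Astar : ℝ) where
  F : ℝ → ℝ
  deg : ℤ
  lift_add_one : ∀ x : ℝ, F (x + 1) = F x + deg
  contDiff : ContDiff ℝ 2 F
  expanding : ∀ x : ℝ, lam ≤ deriv F x
  second_bound : ∀ x : ℝ, |deriv (deriv F) x| ≤ Astar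

namespace CM

variable {lam Astar : ℝ}

/-- The induced map on the circle. -/
def toMap (T : CM lam Astar) : Circle1 → Circle1 :=
  fun x => (↑(T.F ((AddCircle.equivIco 1 0 x : ℝ))) : Circle1)

/-- The derivative of `T`, as a function on the circle. -/
def dmap (T : CM lam Astar) : Circle1 → ℝ :=
  fun x => deriv T.F ((AddCircle.equivIco 1 0 x : ℝ))

end CM

/-- The `C¹` distance on the space of maps. -/
def dC1 {lam Astar : ℝ} (T₁ T₂ : CM lam Astar) : ℝ :=
  (⨆ x : Circle1, dist (T₁.toMap x) (T₂.toMap x)) + (⨆ x : Circle1, |T₁.dmap x - T₂.dmap x|)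

/-- The transfer operator `ℒ_T h (x) = ∑_{T y = x} h y / T' y`. -/
def transfer {lam Astar : ℝ} (T : CM lam Astar) (h : Circle1 → ℝ) : Circle1 → ℝ :=
  fun x => ∑' y : {y : Circle1 // T.toMap y = x}, h y / T.dmap y

/-- Iterated transfer operators `ℒ_k ⋯ ℒ_1` of the sequence `T_1, T_2, …` (`Ts i = T_i`). -/
def transferIter {lam Astar : ℝ} (Ts : ℕ → CM lam Astar) : ℕ → (Circle1 → ℝ) → (Circle1 → ℝ)
  | 0, h => h
  | (k+1), h => transfer (Ts (k+1)) (transferIter Ts k h)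

/-- Composition `T_k ∘ ⋯ ∘ T_1` as circle maps. -/
def mapIter {lam Astar : ℝ} (Ts : ℕ → CM lam Astar) : ℕ → Circle1 → Circle1
  | 0 => id
  | (k+1) => (Ts (k+1)).toMap ∘ mapIter Ts k

/-- Composition of the lifts `F_k ∘ ⋯ ∘ F_1`. -/
def liftIter {lam Astar : ℝ} (Ts : ℕ → CM lam Astar) : ℕ → ℝ → ℝ
  | 0 => id
  | (k+1) => (Ts (k+1)).F ∘ liftIter Ts k

/-- A real representative of `z`. -/
def zrep (z : Circle1) : ℝ := (AddCircle.equivIco 1 0 z : ℝ)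

/-- The coordinate on the cut circle `J_z = 𝕊 ∖ {z}`. -/
def arcCoord (z x : Circle1) : ℝ := ((AddCircle.equivIoc 1 (zrep z) x : ℝ))

/-- `|x − y|_z`: the length of the subarc of `J_z` connecting `x` and `y`. -/
def arcDist (z x y : Circle1) : ℝ := |arcCoord z x - arcCoord z y|

/-- `g` is Lipschitz on `J_z = 𝕊 ∖ {z}` with constant `L`. -/
def LipOnArc (z : Circle1) (L : ℝ) (g : Circle1 → ℝ) : Prop :=
  ∀ x y : Circle1, x ≠ z → y ≠ z → |g x - g y| ≤ L * arcDist z x y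

/-- A probability density w.r.t. the Haar–Lebesgue measure `𝔪` on the circle. -/
def IsProbDensity (ψ : Circle1 → ℝ) : Prop :=
  Integrable ψ volume ∧ (∫ x : Circle1, ψ x) = 1 ∧ ∀ x, 0 ≤ ψ x

/-- The class `𝒟_L`: positive probability densities whose logarithm is Lipschitz
with constant `L` on `J_z` for some `z`. -/
def memD (L : ℝ) (ψ : Circle1 → ℝ) : Prop :=
  IsProbDensity ψ ∧ (∀ x, 0 < ψ x) ∧ ∃ z : Circle1, LipOnArc z L (fun x => Real.log (ψ x))

/-- The `L¹(𝔪)` norm. -/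
def l1norm (h : Circle1 → ℝ) : ℝ := ∫ x : Circle1, |h x|

/-- The supremum norm. -/
def supNorm (h : Circle1 → ℝ) : ℝ := ⨆ x : Circle1, |h x|

/-- The Lipschitz constant of `h` (w.r.t. the metric of the circle). -/
def lipConst (h : Circle1 → ℝ) : ℝ :=
  sInf {L : ℝ | 0 ≤ L ∧ ∀ x y : Circle1, |h x - h y| ≤ L * dist x y}

/-- The Lipschitz norm `‖h‖_Lip = Lip(h) + ‖h‖_∞`. -/
def lipNorm (h : Circle1 → ℝ) : ℝ := lipConst h + supNorm h

/-- `ρ` is the density of the SRB measure of `T`: the density of a `T`-invariant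
probability measure equivalent to `𝔪`. -/
def IsSRBDensity {lam Astar : ℝ} (T : CM lam Astar) (ρ : Circle1 → ℝ) : Prop :=
  IsProbDensity ρ ∧ (∀ᵐ x : Circle1, 0 < ρ x) ∧
    Measure.map T.toMap (volume.withDensity (fun x => ENNReal.ofReal (ρ x))) =
      volume.withDensity (fun x => ENNReal.ofReal (ρ x))

section QDS

variable {lam Astar : ℝ}

/-- `x_{n,k} = T_{n,k} ∘ ⋯ ∘ T_{n,1}` for a triangular array. -/
def arrIter (Tarr : ℕ → ℕ → CM lam Astar) (n : ℕ) : ℕ → Circle1 → Circle1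
  | 0 => id
  | (k+1) => (Tarr n (k+1)).toMap ∘ arrIter Tarr n k

/-- `ℒ_{n,k} ⋯ ℒ_{n,1}` for a triangular array. -/
def arrTransfer (Tarr : ℕ → ℕ → CM lam Astar) (n : ℕ) : ℕ → (Circle1 → ℝ) → (Circle1 → ℝ)
  | 0, h => h
  | (k+1), h => transfer (Tarr n (k+1)) (arrTransfer Tarr n k h)

/-- `f_{n,k} = f ∘ T_{n,k} ∘ ⋯ ∘ T_{n,1}` evaluated at `x`. -/
def fnk (Tarr : ℕ → ℕ → CM lam Astar) (f : Circle1 → ℝ) (n k : ℕ) (x : Circle1) : ℝ :=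
  f (arrIter Tarr n k x)

/-- `ζₙ(x,t) = n⁻¹ (∑_{k<⌊nt⌋} f_{n,k}(x) + {nt}·f_{n,⌊nt⌋}(x))`. -/
def zetaP (Tarr : ℕ → ℕ → CM lam Astar) (f : Circle1 → ℝ) (n : ℕ) (x : Circle1) (t : ℝ) : ℝ :=
  (n : ℝ)⁻¹ * ((∑ k ∈ Finset.range ⌊(n : ℝ) * t⌋₊, fnk Tarr f n k x) +
    Int.fract ((n : ℝ) * t) * fnk Tarr f n ⌊(n : ℝ) * t⌋₊ x)

/-- `ξₙ(x,t) = √n ζₙ(x,t) − √n μ(ζₙ(·,t))` for a measure `μ`. -/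
def xiP (Tarr : ℕ → ℕ → CM lam Astar) (f : Circle1 → ℝ) (μ : Measure Circle1) (n : ℕ)
    (x : Circle1) (t : ℝ) : ℝ :=
  Real.sqrt n * zetaP Tarr f n x t - Real.sqrt n * ∫ y, zetaP Tarr f n y t ∂μ

/-- The Hölder continuity (exponent `η`) of the curve `γ` on `[0,1]`, w.r.t. `d_{C¹}`. -/
def HolderCurve (η : ℝ) (γ : ℝ → CM lam Astar) : Prop :=
  ∃ H : ℝ, ∀ s ∈ Icc (0:ℝ) 1, ∀ t ∈ Icc (0:ℝ) 1, dC1 (γ s) (γ t) ≤ H * |s - t| ^ η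

/-- The convergence-rate condition `sup_n n^η sup_t d_{C¹}(T_{n,⌊nt⌋}, γ_t) < ∞`. -/
def ArrayApprox (η : ℝ) (γ : ℝ → CM lam Astar) (Tarr : ℕ → ℕ → CM lam Astar) : Prop :=
  ∃ M : ℝ, ∀ n : ℕ, 1 ≤ n → ∀ t ∈ Icc (0:ℝ) 1,
    (n : ℝ) ^ η * dC1 (Tarr n ⌊(n : ℝ) * t⌋₊) (γ t) ≤ M

end QDS

/-- The path space: functions `[0,1] → ℝ` with the topology of uniform convergence;
continuous paths (with the supremum metric) embed isometrically. -/
abbrev PathSpace : Type := (Icc (0:ℝ) 1) →ᵤ ℝ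

instance : MeasurableSpace PathSpace := borel PathSpace

/-- A function `[0,1] → ℝ` (given as a function on `ℝ`) as a point of the path space. -/
def pathOf (g : ℝ → ℝ) : PathSpace := UniformFun.ofFun (fun t => g t)

/-- Evaluation of a path at time `t` (clamped to `[0,1]`). -/
def evalPath (t : ℝ) (ω : PathSpace) : ℝ := UniformFun.toFun ω (projIcc 0 1 zero_le_one t)


section Extra

variable {lam Astar : ℝ}

/-- `μ(ζₙ(·,t))` for the measure with density `ρ` w.r.t. `𝔪`. -/
def zetaMean (Tarr : ℕ → ℕ → CM lam Astar) (f : Circle1 → ℝ) (ρ : Circle1 → ℝ)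
    (n : ℕ) (t : ℝ) : ℝ :=
  ∫ y : Circle1, zetaP Tarr f n y t * ρ y

/-- `𝔪(ζₙ(·,t))`, the mean w.r.t. the Lebesgue measure. -/
def zetaMeanM (Tarr : ℕ → ℕ → CM lam Astar) (f : Circle1 → ℝ) (n : ℕ) (t : ℝ) : ℝ :=
  ∫ y : Circle1, zetaP Tarr f n y t

/-- `ξₙ(x,t) = √n ζₙ(x,t) − √n μ(ζₙ(·,t))`, where `μ` has density `ρ`. -/
def xiD (Tarr : ℕ → ℕ → CM lam Astar) (f : Circle1 → ℝ) (ρ : Circle1 → ℝ)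
    (n : ℕ) (x : Circle1) (t : ℝ) : ℝ :=
  Real.sqrt n * zetaP Tarr f n x t - Real.sqrt n * zetaMean Tarr f ρ n t

end Extra

/-- The σ-algebra `𝔉_t` on the path space, generated by the evaluations at times `s ∈ [0,t]`. -/
def pathFiltration (t : ℝ) : MeasurableSpace PathSpace :=
  ⨆ (s : ℝ) (_ : 0 ≤ s ∧ s ≤ t), MeasurableSpace.comap (evalPath s) (borel ℝ)

/-- The process `M_t(ω) = A(ω(t)) − A(ω(0)) − ½∫₀ᵗ σ̂ₛ²·A''(ω(s)) ds`. -/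
def MGproc (σ2 : ℝ → ℝ) (A : ℝ → ℝ) (t : ℝ) (ω : PathSpace) : ℝ :=
  A (evalPath t ω) - A (evalPath 0 ω) -
    (1/2) * ∫ s in (0:ℝ)..t, σ2 s * deriv (deriv A) (evalPath s ω)

/-- `P` solves the martingale problem on `C⁰([0,1],ℝ)` for the generator `½σ̂ₜ² d²/dx²`,
started at `0`:  `P` is a probability measure, concentrated on continuous paths starting at `0`,
and for every `A ∈ C_c^∞(ℝ)` the process `MGproc σ2 A` is a `P`-martingale w.r.t. the
natural filtration `𝔉_t`.  -/
def SolvesMartingaleProblem (σ2 : ℝ → ℝ) (P : Measure PathSpace) : Prop :=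
  IsProbabilityMeasure P ∧
  P {ω : PathSpace | evalPath 0 ω = 0} = 1 ∧
  P {ω : PathSpace | Continuous (UniformFun.toFun ω)} = 1 ∧
  ∀ A : ℝ → ℝ, ContDiff ℝ (⊤ : ℕ∞) A → HasCompactSupport A →
    (∀ t ∈ Icc (0:ℝ) 1, Integrable (MGproc σ2 A t) P) ∧
    (∀ t ∈ Icc (0:ℝ) 1, @Measurable PathSpace ℝ (pathFiltration t) _ (MGproc σ2 A t)) ∧
    (∀ s ∈ Icc (0:ℝ) 1, ∀ t ∈ Icc (0:ℝ) 1, s ≤ t →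
      P[MGproc σ2 A t | pathFiltration s] =ᵐ[P] MGproc σ2 A s)

end

/-!
Inverse branches of an expanding map contract distances, so its transfer operator maps the cone of
positive functions whose logarithm is `a`-Lipschitz into the one of constant `a / λ + A* / λ²`,
which is smaller once `a` is large. On a space of finite diameter such functions are bounded below
by a fixed fraction of their mean. Subtracting that common part from two functions of the cone with
the same mean leaves two functions of the cone whose means are smaller by a fixed factor; hence the
`L¹` distance of their images under the iterated transfer operator decays exponentially, at a rate
that depends on `λ` and `A*` only.

An absolutely continuous invariant measure is a limit of push-forwards of Lebesgue measure, with an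
error that is uniform in the map. Its correlations therefore decay exponentially, which sums the
variance of the Birkhoff sums to the Green–Kubo series. Each correlation is a uniform limit of
integrals against Lebesgue measure that are continuous in the map, hence is continuous in the map,
and the uniform bound on the correlations passes continuity on to the series. On a compact set of
parameters continuity is uniform.
-/

section LogLipschitz

variable {α : Type*} [PseudoMetricSpace α]

/-- The cone of nonnegative functions whose logarithm is Lipschitz with constant `a`. The defining
inequality is multiplicative, so that the zero function belongs to every such cone. -/
structure LogLip (a : ℝ) (ψ : α → ℝ) : Prop where
  nonneg : ∀ x, 0 ≤ ψ x
  le_exp_mul : ∀ x y, ψ x ≤ Real.exp (a * dist x y) * ψ y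

namespace LogLip

variable {a b : ℝ} {ψ φ : α → ℝ}

theorem const (ha : 0 ≤ a) {c : ℝ} (hc : 0 ≤ c) : LogLip a (fun _ : α => c) where
  nonneg _ := hc
  le_exp_mul _ _ := le_mul_of_one_le_left hc (Real.one_le_exp (by positivity))

theorem mono (hψ : LogLip a ψ) (hab : a ≤ b) : LogLip b ψ where
  nonneg := hψ.nonneg
  le_exp_mul x y := (hψ.le_exp_mul x y).trans <| by
    have := hψ.nonneg y
    gcongr

theorem mul (hψ : LogLip a ψ) (hφ : LogLip b φ) : LogLip (a + b) (fun x => ψ x * φ x) where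
  nonneg x := mul_nonneg (hψ.nonneg x) (hφ.nonneg x)
  le_exp_mul x y := by
    have hψy := hψ.nonneg y
    calc ψ x * φ x
        ≤ (Real.exp (a * dist x y) * ψ y) * (Real.exp (b * dist x y) * φ y) :=
          mul_le_mul (hψ.le_exp_mul x y) (hφ.le_exp_mul x y) (hφ.nonneg x) (by positivity)
      _ = Real.exp ((a + b) * dist x y) * (ψ y * φ y) := by
          rw [add_mul, Real.exp_add]; ring

theorem const_mul (hψ : LogLip a ψ) {c : ℝ} (hc : 0 ≤ c) : LogLip a (fun x => c * ψ x) := by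
  simpa only [zero_add] using (LogLip.const le_rfl hc).mul hψ

theorem continuous (hψ : LogLip a ψ) : Continuous ψ := by
  refine continuous_iff_continuousAt.2 fun x => ?_
  have hd : Tendsto (fun y => a * dist y x) (𝓝 x) (𝓝 0) := by
    have : Continuous fun y => a * dist y x := by fun_prop
    simpa using this.tendsto x
  have hupper : Tendsto (fun y => Real.exp (a * dist y x) * ψ x) (𝓝 x) (𝓝 (ψ x)) := by
    simpa using (hd.rexp).mul_const (ψ x)
  have hlower : Tendsto (fun y => Real.exp (-(a * dist y x)) * ψ x) (𝓝 x) (𝓝 (ψ x)) := by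
    simpa using (hd.neg.rexp).mul_const (ψ x)
  refine tendsto_of_tendsto_of_tendsto_of_le_of_le hlower hupper (fun y => ?_)
    fun y => hψ.le_exp_mul y x
  rw [Real.exp_neg, inv_mul_le_iff₀ (Real.exp_pos _), dist_comm]
  exact hψ.le_exp_mul x y

theorem inv (hψ : LogLip a ψ) (hpos : ∀ x, 0 < ψ x) : LogLip a fun x => (ψ x)⁻¹ where
  nonneg x := inv_nonneg.2 (hψ.nonneg x)
  le_exp_mul x y := by
    rw [← div_eq_mul_inv, le_div_iff₀ (hpos y), inv_mul_le_iff₀ (hpos x), mul_comm (ψ x),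
      dist_comm]
    exact hψ.le_exp_mul y x

theorem sum {ι : Type*} {s : Finset ι} {ψ : ι → α → ℝ} (hψ : ∀ i ∈ s, LogLip a (ψ i)) :
    LogLip a fun x => ∑ i ∈ s, ψ i x where
  nonneg x := Finset.sum_nonneg fun i hi => (hψ i hi).nonneg x
  le_exp_mul x y := by
    rw [Finset.mul_sum]
    exact Finset.sum_le_sum fun i hi => (hψ i hi).le_exp_mul x y

theorem comp_lipschitzWith {β : Type*} [PseudoMetricSpace β] (hψ : LogLip a ψ) (ha : 0 ≤ a)
    {K : NNReal} {g : β → α} (hg : LipschitzWith K g) : LogLip (a * K) fun x => ψ (g x) where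
  nonneg x := hψ.nonneg (g x)
  le_exp_mul x y := (hψ.le_exp_mul _ _).trans <| by
    have := hψ.nonneg (g y)
    rw [mul_assoc]
    gcongr
    exact hg.dist_le_mul x y

theorem of_lipschitzWith {K : NNReal} (hψ : LipschitzWith K ψ) {c : ℝ} (hc : 0 < c)
    (hcψ : ∀ x, c ≤ ψ x) : LogLip (K / c) ψ where
  nonneg x := hc.le.trans (hcψ x)
  le_exp_mul x y := by
    calc ψ x ≤ ψ y + K / c * dist x y * c := by
          simpa only [div_mul_eq_mul_div, div_mul_cancel₀ _ hc.ne'] using hψ.le_add_mul x y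
      _ ≤ ψ y + K / c * dist x y * ψ y := by gcongr; exact hcψ y
      _ = (K / c * dist x y + 1) * ψ y := by ring
      _ ≤ Real.exp (K / c * dist x y) * ψ y :=
          mul_le_mul_of_nonneg_right (Real.add_one_le_exp _) (hc.le.trans (hcψ y))

theorem sub_const (hψ : LogLip b ψ) (hb : 0 ≤ b) (hba : b < a) {c : ℝ}
    (hc : ∀ x, c ≤ (1 - b / a) * ψ x) : LogLip a (fun x => ψ x - c) where
  nonneg x := by
    have : 0 ≤ b / a * ψ x := mul_nonneg (div_nonneg hb (hb.trans hba.le)) (hψ.nonneg x)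
    linarith [hc x]
  le_exp_mul x y := by
    have ha : 0 < a := hb.trans_lt hba
    have hexp : Real.exp (b * dist x y) ≤ b / a * Real.exp (a * dist x y) + (1 - b / a) := by
      have hconv := convexOn_exp.2 (mem_univ (a * dist x y)) (mem_univ 0) (div_nonneg hb ha.le)
        (sub_nonneg.2 ((div_le_one ha).2 hba.le)) (add_sub_cancel _ _)
      have hab : b / a * (a * dist x y) = b * dist x y := by field_simp
      simpa only [smul_eq_mul, mul_zero, add_zero, Real.exp_zero, mul_one, hab] using hconv
    have hone : 1 ≤ Real.exp (a * dist x y) := Real.one_le_exp (by positivity)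
    calc ψ x - c
        ≤ (b / a * Real.exp (a * dist x y) + (1 - b / a)) * ψ y - c :=
          sub_le_sub_right ((hψ.le_exp_mul x y).trans
            (mul_le_mul_of_nonneg_right hexp (hψ.nonneg y))) c
      _ = Real.exp (a * dist x y) * (ψ y - c)
            - (Real.exp (a * dist x y) - 1) * ((1 - b / a) * ψ y - c) := by ring
      _ ≤ Real.exp (a * dist x y) * (ψ y - c) :=
          sub_le_self _ (mul_nonneg (sub_nonneg.2 hone) (sub_nonneg.2 (hc y)))

theorem exp_neg_mul_integral_le [BoundedSpace α] [MeasurableSpace α] {m : Measure α}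
    [IsProbabilityMeasure m] (hψ : LogLip a ψ) (ha : 0 ≤ a) (x : α) :
    Real.exp (-(a * Metric.diam (univ : Set α))) * ∫ y, ψ y ∂m ≤ ψ x := by
  have hle : ∀ y, ψ y ≤ Real.exp (a * Metric.diam (univ : Set α)) * ψ x := fun y => by
    have hdist : dist y x ≤ Metric.diam (univ : Set α) :=
      Metric.dist_le_diam_of_mem (Bornology.IsBounded.all _) (mem_univ y) (mem_univ x)
    have := hψ.nonneg x
    exact (hψ.le_exp_mul y x).trans (by gcongr)
  have hint : ∫ y, ψ y ∂m ≤ Real.exp (a * Metric.diam (univ : Set α)) * ψ x := by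
    simpa using integral_mono_of_nonneg (μ := m) (Eventually.of_forall hψ.nonneg)
      (integrable_const _) (Eventually.of_forall hle)
  rwa [Real.exp_neg, inv_mul_le_iff₀ (Real.exp_pos _)]

end LogLip

end LogLipschitz

section LipschitzApproximation

variable {α : Type*} [PseudoMetricSpace α]

theorem exists_forall_le_add_mul_dist_add [CompactSpace α] {g : α → ℝ} (hg : Continuous g)
    {ε : ℝ} (hε : 0 < ε) : ∃ K : NNReal, ∀ x y, g x ≤ g y + K * dist x y + ε := by
  obtain ⟨B, hB⟩ := isCompact_univ.exists_bound_of_continuousOn hg.continuousOn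
  obtain ⟨δ, hδ, hclose⟩ :=
    Metric.uniformContinuous_iff.1 (CompactSpace.uniformContinuous_of_continuous hg) ε hε
  refine ⟨(2 * B / δ).toNNReal, fun x y => ?_⟩
  have hK : 2 * B / δ ≤ (2 * B / δ).toNNReal := Real.le_coe_toNNReal _
  rcases lt_or_ge (dist x y) δ with hnear | hfar
  · have hxy := (abs_lt.1 (hclose hnear)).2
    have : 0 ≤ ((2 * B / δ).toNNReal : ℝ) * dist x y := by positivity
    linarith
  · have hjump : 2 * B ≤ (2 * B / δ).toNNReal * dist x y := by
      calc 2 * B = 2 * B / δ * δ := by field_simp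
        _ ≤ (2 * B / δ).toNNReal * dist x y := by gcongr
    linarith [(abs_le.1 (hB x (mem_univ x))).2, (abs_le.1 (hB y (mem_univ y))).1]

/-- The inf-convolution of `g` with `K * dist`: the largest `K`-Lipschitz minorant of `g`. -/
noncomputable def lipschitzMinorant (K : NNReal) (g : α → ℝ) (x : α) : ℝ :=
  ⨅ y, (g y + K * dist x y)

variable {K : NNReal} {g : α → ℝ} {ε : ℝ}

theorem bddBelow_range_add_mul_dist (hg : ∀ x y, g x ≤ g y + K * dist x y + ε) (x : α) :
    BddBelow (range fun y => g y + K * dist x y) :=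
  ⟨g x - ε, forall_mem_range.2 fun y => sub_le_iff_le_add.2 (hg x y)⟩

theorem lipschitzWith_lipschitzMinorant (hg : ∀ x y, g x ≤ g y + K * dist x y + ε) :
    LipschitzWith K (lipschitzMinorant K g) := by
  refine LipschitzWith.of_le_add_mul K fun x x' => ?_
  have : Nonempty α := ⟨x⟩
  refine sub_le_iff_le_add.1 (le_ciInf fun y => sub_le_iff_le_add.2 ?_)
  calc lipschitzMinorant K g x ≤ g y + K * dist x y :=
        ciInf_le (bddBelow_range_add_mul_dist hg x) y
    _ ≤ g y + K * (dist x x' + dist x' y) := by gcongr; exact dist_triangle _ _ _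
    _ = g y + K * dist x' y + K * dist x x' := by ring

theorem abs_sub_lipschitzMinorant_le (hg : ∀ x y, g x ≤ g y + K * dist x y + ε) (x : α) :
    |g x - lipschitzMinorant K g x| ≤ ε := by
  have : Nonempty α := ⟨x⟩
  have hlower : g x - ε ≤ lipschitzMinorant K g x :=
    le_ciInf fun y => sub_le_iff_le_add.2 (hg x y)
  have hupper : lipschitzMinorant K g x ≤ g x := by
    simpa [lipschitzMinorant] using ciInf_le (bddBelow_range_add_mul_dist hg x) x
  exact abs_le.2 ⟨by linarith, by linarith⟩

theorem integrable_of_continuous [CompactSpace α] [MeasurableSpace α] [OpensMeasurableSpace α]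
    {m : Measure α} [IsFiniteMeasureOnCompacts m] (hg : Continuous g) : Integrable g m :=
  hg.integrable_of_hasCompactSupport (.of_compactSpace g)

theorem exists_lipschitzWith_integral_abs_sub_le [CompactSpace α] [MeasurableSpace α]
    [BorelSpace α] {m : Measure α} [IsProbabilityMeasure m] (hg : Integrable g m) (hε : 0 < ε) :
    ∃ (K : NNReal) (ψ : α → ℝ), LipschitzWith K ψ ∧ ∫ x, |g x - ψ x| ∂m ≤ ε := by
  obtain ⟨φ, hφ, hφint⟩ := hg.exists_boundedContinuous_integral_sub_le (half_pos hε)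
  obtain ⟨K, hK⟩ := exists_forall_le_add_mul_dist_add φ.continuous (half_pos hε)
  have hψ := lipschitzWith_lipschitzMinorant hK
  have hgφ : Integrable (fun x => |g x - φ x|) m := (hg.sub hφint).abs
  have hφψ : Integrable (fun x => |φ x - lipschitzMinorant K φ x|) m :=
    integrable_of_continuous (φ.continuous.sub hψ.continuous).abs
  refine ⟨K, lipschitzMinorant K φ, hψ, ?_⟩
  calc ∫ x, |g x - lipschitzMinorant K φ x| ∂m
      ≤ ∫ x, (|g x - φ x| + |φ x - lipschitzMinorant K φ x|) ∂m :=
        integral_mono (hg.sub (integrable_of_continuous hψ.continuous)).abs (hgφ.add hφψ)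
          fun x => abs_sub_le _ _ _
    _ = ∫ x, |g x - φ x| ∂m + ∫ x, |φ x - lipschitzMinorant K φ x| ∂m :=
        integral_add hgφ hφψ
    _ ≤ ε / 2 + ∫ _, ε / 2 ∂m :=
        add_le_add hφ (integral_mono hφψ (integrable_const _)
          fun x => abs_sub_lipschitzMinorant_le hK x)
    _ = ε := by simp

/-- Replacing `ψ` by `ψ - ∫ ψ` at most doubles the `L¹` error when `∫ g = 0`. -/
theorem exists_lipschitzWith_integral_eq_zero_integral_abs_sub_le [CompactSpace α]
    [MeasurableSpace α] [BorelSpace α] {m : Measure α} [IsProbabilityMeasure m]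
    (hg : Integrable g m) (hg0 : ∫ x, g x ∂m = 0) (hε : 0 < ε) :
    ∃ (K : NNReal) (ψ : α → ℝ),
      LipschitzWith K ψ ∧ ∫ x, ψ x ∂m = 0 ∧ ∫ x, |g x - ψ x| ∂m ≤ ε := by
  obtain ⟨K, ψ, hψ, hgψ⟩ := exists_lipschitzWith_integral_abs_sub_le hg (half_pos hε)
  have hψint : Integrable ψ m := integrable_of_continuous hψ.continuous
  have hmean : |∫ x, ψ x ∂m| ≤ ε / 2 := by
    calc |∫ x, ψ x ∂m| = |∫ x, (g x - ψ x) ∂m| := by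
          rw [integral_sub hg hψint, hg0, zero_sub, abs_neg]
      _ ≤ ∫ x, |g x - ψ x| ∂m := abs_integral_le_integral_abs
      _ ≤ ε / 2 := hgψ
  have hLip : LipschitzWith K fun x => ψ x - ∫ y, ψ y ∂m := by
    simpa using hψ.sub (LipschitzWith.const (α := α) (∫ y, ψ y ∂m))
  refine ⟨K, fun x => ψ x - ∫ y, ψ y ∂m, hLip, ?_, ?_⟩
  · simp [integral_sub hψint (integrable_const _)]
  · have hsub : Integrable (fun x => |g x - ψ x|) m := (hg.sub hψint).abs
    calc ∫ x, |g x - (ψ x - ∫ y, ψ y ∂m)| ∂m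
        ≤ ∫ x, (|g x - ψ x| + |∫ y, ψ y ∂m|) ∂m :=
          integral_mono (hg.sub (integrable_of_continuous hLip.continuous)).abs
            (hsub.add (integrable_const _)) fun x => by
              simpa only [← sub_add] using abs_add_le _ _
      _ = ∫ x, |g x - ψ x| ∂m + |∫ y, ψ y ∂m| := by
          rw [integral_add hsub (integrable_const _)]; simp
      _ ≤ ε := by linarith

end LipschitzApproximation

section Mixing

theorem abs_integral_mul_le {β : Type*} [MeasurableSpace β] {m : Measure β} {g u : β → ℝ}
    (hg : Integrable g m) {B : ℝ} (hB : ∀ x, |u x| ≤ B) :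
    |∫ x, g x * u x ∂m| ≤ (∫ x, |g x| ∂m) * B := by
  have hle : ∀ x, ‖g x * u x‖ ≤ |g x| * B := fun x => by
    rw [norm_mul]
    exact mul_le_mul_of_nonneg_left (hB x) (abs_nonneg _)
  rw [← integral_mul_const]
  exact norm_integral_le_of_norm_le (hg.abs.mul_const B) (.of_forall hle)

variable {α : Type*} [PseudoMetricSpace α] [MeasurableSpace α] {m : Measure α}
  {T : α → α} {L : (α → ℝ) → α → ℝ} {θ C a : ℝ}

/-- `L` acts as the transfer operator of the continuous map `T` with respect to `m`, and maps
log-Lipschitz functions to log-Lipschitz functions according to the affine law `a ↦ θ * a + C` on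
Lipschitz constants, with `θ < 1`: a Lasota–Yorke inequality for logarithms. -/
structure LogLipContraction (m : Measure α) (T : α → α) (L : (α → ℝ) → α → ℝ) (θ C : ℝ) :
    Prop where
  rate_mem : θ ∈ Ioo (0 : ℝ) 1
  const_nonneg : 0 ≤ C
  continuous : Continuous T
  integral_mul : ∀ ψ u : α → ℝ, Continuous ψ → Continuous u →
    ∫ x, L ψ x * u x ∂m = ∫ x, ψ x * u (T x) ∂m
  logLip : ∀ (a : ℝ) (ψ : α → ℝ), 0 ≤ a → LogLip a ψ → LogLip (θ * a + C) (L ψ)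

/-- The factor by which one step of a log-Lipschitz contraction with parameters `θ`, `C` contracts
`L¹`-distances inside the cone of constant `a`, on a space of diameter `D`. -/
noncomputable def mixingRate (D θ C a : ℝ) : ℝ :=
  1 - (1 - (θ * a + C) / a) * Real.exp (-((θ * a + C) * D))

theorem mul_add_lt_of_div_one_sub_lt (hθ : θ < 1) (ha : C / (1 - θ) < a) : θ * a + C < a := by
  have := (div_lt_iff₀ (sub_pos.2 hθ)).1 ha
  linarith

theorem mixingRate_mem_Ioo {D : ℝ} (hD : 0 ≤ D) (hθ : θ ∈ Ioo (0 : ℝ) 1) (hC : 0 ≤ C)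
    (ha : C / (1 - θ) < a) : mixingRate D θ C a ∈ Ioo (0 : ℝ) 1 := by
  have hapos : 0 < a := (div_nonneg hC (sub_nonneg.2 hθ.2.le)).trans_lt ha
  have hb : 0 < θ * a + C := add_pos_of_pos_of_nonneg (mul_pos hθ.1 hapos) hC
  have hgap : 0 < 1 - (θ * a + C) / a :=
    sub_pos.2 ((div_lt_one hapos).2 (mul_add_lt_of_div_one_sub_lt hθ.2 ha))
  have hexp : Real.exp (-((θ * a + C) * D)) ≤ 1 :=
    Real.exp_le_one_iff.2 (neg_nonpos.2 (mul_nonneg hb.le hD))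
  have hprod : (1 - (θ * a + C) / a) * Real.exp (-((θ * a + C) * D)) < 1 :=
    mul_lt_one_of_nonneg_of_lt_one_left hgap.le (sub_lt_self _ (div_pos hb hapos)) hexp
  exact ⟨sub_pos.2 hprod, sub_lt_self _ (mul_pos hgap (Real.exp_pos _))⟩

namespace LogLipContraction

variable {ψ ψ₁ ψ₂ u : α → ℝ} {B : ℝ}

theorem integral_eq (h : LogLipContraction m T L θ C) (hψ : Continuous ψ) :
    ∫ x, L ψ x ∂m = ∫ x, ψ x ∂m := by
  simpa using h.integral_mul ψ (fun _ => 1) hψ continuous_const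

theorem pos_of_lt (h : LogLipContraction m T L θ C) (ha : C / (1 - θ) < a) : 0 < a :=
  (div_nonneg h.const_nonneg (sub_nonneg.2 h.rate_mem.2.le)).trans_lt ha

theorem logLip_iterate (h : LogLipContraction m T L θ C) (ha : C / (1 - θ) ≤ a)
    (hψ : LogLip a ψ) (n : ℕ) : LogLip a (L^[n] ψ) := by
  have hfix : θ * a + C ≤ a := by
    have := (div_le_iff₀ (sub_pos.2 h.rate_mem.2)).1 ha
    linarith
  have ha0 : 0 ≤ a := (div_nonneg h.const_nonneg (sub_nonneg.2 h.rate_mem.2.le)).trans ha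
  induction n with
  | zero => exact hψ
  | succ n ih =>
    rw [Function.iterate_succ_apply']
    exact (h.logLip a _ ha0 ih).mono hfix

theorem integral_iterate_mul (h : LogLipContraction m T L θ C) (ha : C / (1 - θ) ≤ a)
    (hψ : LogLip a ψ) (hu : Continuous u) (n : ℕ) :
    ∫ x, L^[n] ψ x * u x ∂m = ∫ x, ψ x * u (T^[n] x) ∂m := by
  induction n generalizing u with
  | zero => rfl
  | succ n ih =>
    rw [Function.iterate_succ_apply',
      h.integral_mul _ u (h.logLip_iterate ha hψ n).continuous hu]
    simpa only [Function.iterate_succ_apply', Function.comp_apply] using ih (hu.comp h.continuous)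

variable [IsProbabilityMeasure m]

/-- The Doeblin minorization: every density in the cone retains a fixed fraction of its mass as a
constant after one step. -/
theorem logLip_sub_const [BoundedSpace α] (h : LogLipContraction m T L θ C) (ha : C / (1 - θ) < a)
    (hψ : LogLip a ψ) :
    LogLip a fun x =>
      L ψ x - (1 - mixingRate (Metric.diam (univ : Set α)) θ C a) * ∫ y, ψ y ∂m := by
  have hapos := h.pos_of_lt ha
  have hb : 0 ≤ θ * a + C := add_nonneg (mul_nonneg h.rate_mem.1.le hapos.le) h.const_nonneg
  have hba := mul_add_lt_of_div_one_sub_lt h.rate_mem.2 ha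
  have hLψ := h.logLip a ψ hapos.le hψ
  refine hLψ.sub_const hb hba fun x => ?_
  have hlow := hLψ.exp_neg_mul_integral_le (m := m) hb x
  rw [h.integral_eq hψ.continuous] at hlow
  rw [mixingRate, sub_sub_cancel, mul_assoc]
  exact mul_le_mul_of_nonneg_left hlow (sub_nonneg.2 ((div_le_one hapos).2 hba.le))

variable [CompactSpace α] [OpensMeasurableSpace α]

theorem integral_sub_const (h : LogLipContraction m T L θ C) (hψ : Continuous ψ)
    (hLψ : Continuous (L ψ)) (c : ℝ) : ∫ x, (L ψ x - c) ∂m = ∫ x, ψ x ∂m - c := by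
  rw [integral_sub (integrable_of_continuous hLψ) (integrable_const _), h.integral_eq hψ]
  simp

theorem integral_mul_comp_eq_sub_const (h : LogLipContraction m T L θ C) (hψ : Continuous ψ)
    (hLψ : Continuous (L ψ)) (hu : Continuous u) (c : ℝ) :
    ∫ x, ψ x * u (T x) ∂m = ∫ x, (L ψ x - c) * u x ∂m + c * ∫ x, u x ∂m := by
  have hLu : Integrable (fun x => L ψ x * u x) m := integrable_of_continuous (hLψ.mul hu)
  have hcu : Integrable (fun x => c * u x) m :=
    integrable_of_continuous (continuous_const.mul hu)
  simp only [sub_mul]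
  rw [integral_sub hLu hcu, integral_const_mul, sub_add_cancel, h.integral_mul ψ u hψ hu]

theorem abs_integral_mul_comp_iterate_sub_le (h : LogLipContraction m T L θ C)
    (ha : C / (1 - θ) < a) (hψ₁ : LogLip a ψ₁) (hψ₂ : LogLip a ψ₂)
    (heq : ∫ x, ψ₁ x ∂m = ∫ x, ψ₂ x ∂m) (hu : Continuous u) (hB : ∀ x, |u x| ≤ B) (n : ℕ) :
    |∫ x, ψ₁ x * u (T^[n] x) ∂m - ∫ x, ψ₂ x * u (T^[n] x) ∂m| ≤
      2 * B * (∫ x, ψ₁ x ∂m) * mixingRate (Metric.diam (univ : Set α)) θ C a ^ n := by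
  induction n generalizing ψ₁ ψ₂ with
  | zero =>
    have h₁ := abs_integral_mul_le (m := m) (integrable_of_continuous hψ₁.continuous) hB
    have h₂ := abs_integral_mul_le (m := m) (integrable_of_continuous hψ₂.continuous) hB
    simp only [abs_of_nonneg (hψ₁.nonneg _)] at h₁
    simp only [abs_of_nonneg (hψ₂.nonneg _), ← heq] at h₂
    simp only [Function.iterate_zero, id, pow_zero, mul_one]
    exact (abs_sub _ _).trans (by linarith)
  | succ n ih =>
    have hun : Continuous fun x => u (T^[n] x) := hu.comp (h.continuous.iterate n)
    have hL₁ := (h.logLip a ψ₁ (h.pos_of_lt ha).le hψ₁).continuous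
    have hL₂ := (h.logLip a ψ₂ (h.pos_of_lt ha).le hψ₂).continuous
    have hφ₁ := h.logLip_sub_const ha hψ₁
    have hφ₂ := h.logLip_sub_const ha hψ₂
    rw [← heq] at hφ₂
    set r := mixingRate (Metric.diam (univ : Set α)) θ C a
    set c := (1 - r) * ∫ x, ψ₁ x ∂m with hc
    have hstep := ih hφ₁ hφ₂ (by
      rw [h.integral_sub_const hψ₁.continuous hL₁, h.integral_sub_const hψ₂.continuous hL₂, heq])
    rw [h.integral_sub_const hψ₁.continuous hL₁] at hstep
    simp only [Function.iterate_succ_apply]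
    rw [h.integral_mul_comp_eq_sub_const hψ₁.continuous hL₁ hun c,
      h.integral_mul_comp_eq_sub_const hψ₂.continuous hL₂ hun c, add_sub_add_right_eq_sub]
    refine hstep.trans_eq ?_
    rw [hc]
    ring

end LogLipContraction

end Mixing

section InvariantMeasure

open ProbabilityTheory

/-- `μ` is an absolutely continuous invariant probability measure of `T`, the reference measure
being `m`. -/
structure IsACIP {α : Type*} [MeasurableSpace α] (m : Measure α) (T : α → α) (μ : Measure α) :
    Prop where
  isProbabilityMeasure : IsProbabilityMeasure μ
  measurePreserving : MeasurePreserving T μ μ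
  absolutelyContinuous : μ ≪ m

theorem integral_comp_iterate_of_measurePreserving {β : Type*} [MeasurableSpace β] {μ : Measure β}
    {T : β → β} (hT : MeasurePreserving T μ μ) {u : β → ℝ} (hu : AEStronglyMeasurable u μ) (n : ℕ) :
    ∫ x, u (T^[n] x) ∂μ = ∫ x, u x ∂μ := by
  have hmap := hT.iterate n
  rw [← hmap.map_eq] at hu
  rw [← integral_map hmap.measurable.aemeasurable hu, hmap.map_eq]

variable {α : Type*} [PseudoMetricSpace α] [CompactSpace α] [MeasurableSpace α] [BorelSpace α]
  {m μ : Measure α} [IsProbabilityMeasure m] {T : α → α} {L : (α → ℝ) → α → ℝ} {θ C : ℝ}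
  {u : α → ℝ}

namespace LogLipContraction

theorem tendsto_integral_mul_comp_iterate_of_lipschitzWith (h : LogLipContraction m T L θ C)
    {K : NNReal} {ψ : α → ℝ} (hψ : LipschitzWith K ψ) (hψ0 : ∫ x, ψ x ∂m = 0)
    (hu : Continuous u) : Tendsto (fun n => ∫ x, ψ x * u (T^[n] x) ∂m) atTop (𝓝 0) := by
  obtain ⟨A, hA⟩ := isCompact_univ.exists_bound_of_continuousOn hψ.continuous.continuousOn
  obtain ⟨B, hB⟩ := isCompact_univ.exists_bound_of_continuousOn hu.continuousOn
  obtain ⟨x₀⟩ : Nonempty α := m.nonempty_of_neZero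
  have hc : 0 ≤ A + 1 := by linarith [(norm_nonneg _).trans (hA x₀ (mem_univ _))]
  obtain ⟨a, ha⟩ : ∃ a, max (C / (1 - θ)) K < a := exists_gt _
  have hapos := h.pos_of_lt ((le_max_left _ _).trans_lt ha)
  have hshift : LogLip a fun x => ψ x + (A + 1) := by
    refine (LogLip.of_lipschitzWith (K := K) ?_ one_pos fun x => ?_).mono
      (by simpa only [div_one] using (le_max_right _ _).trans ha.le)
    · simpa using hψ.add (LipschitzWith.const (A + 1))
    · linarith [(abs_le.1 (hA x (mem_univ x))).1]
  have hψint : Integrable ψ m := integrable_of_continuous hψ.continuous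
  have heq : ∫ x, (ψ x + (A + 1)) ∂m = ∫ _, A + 1 ∂m := by
    simp [integral_add hψint (integrable_const _), hψ0]
  have hdiff : ∀ n, ∫ x, (ψ x + (A + 1)) * u (T^[n] x) ∂m - ∫ x, (A + 1) * u (T^[n] x) ∂m =
      ∫ x, ψ x * u (T^[n] x) ∂m := fun n => by
    have hun : Continuous fun x => u (T^[n] x) := hu.comp (h.continuous.iterate n)
    have hψu : Integrable (fun x => ψ x * u (T^[n] x)) m :=
      integrable_of_continuous (hψ.continuous.mul hun)
    simp only [add_mul (ψ _)]
    rw [integral_add hψu (integrable_of_continuous (hun.const_mul _)), add_sub_cancel_right]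
  refine squeeze_zero_norm (fun n => ?_) ?_ (a := fun n => 2 * B * (∫ x, (ψ x + (A + 1)) ∂m) *
    mixingRate (Metric.diam (univ : Set α)) θ C a ^ n)
  · rw [Real.norm_eq_abs, ← hdiff]
    exact h.abs_integral_mul_comp_iterate_sub_le ((le_max_left _ _).trans_lt ha) hshift
      (.const hapos.le hc) heq hu (fun x => hB x (mem_univ x)) n
  · have hr := mixingRate_mem_Ioo (Metric.diam_nonneg (s := (univ : Set α))) h.rate_mem
      h.const_nonneg ((le_max_left _ _).trans_lt ha)
    simpa using (tendsto_pow_atTop_nhds_zero_of_lt_one hr.1.le hr.2).const_mul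
      (2 * B * ∫ x, (ψ x + (A + 1)) ∂m)

theorem tendsto_integral_mul_comp_iterate (h : LogLipContraction m T L θ C) {g : α → ℝ}
    (hg : Integrable g m) (hg0 : ∫ x, g x ∂m = 0) (hu : Continuous u) :
    Tendsto (fun n => ∫ x, g x * u (T^[n] x) ∂m) atTop (𝓝 0) := by
  obtain ⟨B, hB⟩ := isCompact_univ.exists_bound_of_continuousOn hu.continuousOn
  obtain ⟨x₀⟩ : Nonempty α := m.nonempty_of_neZero
  have hB0 : 0 ≤ B := (norm_nonneg _).trans (hB x₀ (mem_univ _))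
  refine Metric.tendsto_atTop.2 fun ε hε => ?_
  have hδ : 0 < ε / 2 / (B + 1) := by positivity
  obtain ⟨K, ψ, hψ, hψ0, hgψ⟩ :=
    exists_lipschitzWith_integral_eq_zero_integral_abs_sub_le hg hg0 hδ
  obtain ⟨N, hN⟩ := Metric.tendsto_atTop.1
    (h.tendsto_integral_mul_comp_iterate_of_lipschitzWith hψ hψ0 hu) _ (half_pos hε)
  refine ⟨N, fun n hn => ?_⟩
  have hun : Continuous fun x => u (T^[n] x) := hu.comp (h.continuous.iterate n)
  have hd : Integrable (fun x => g x - ψ x) m := hg.sub (integrable_of_continuous hψ.continuous)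
  have hbound : ∀ x, ‖u (T^[n] x)‖ ≤ B := fun x => hB _ (mem_univ _)
  have hψu : Integrable (fun x => ψ x * u (T^[n] x)) m :=
    integrable_of_continuous (hψ.continuous.mul hun)
  have hdu : Integrable (fun x => (g x - ψ x) * u (T^[n] x)) m :=
    hd.mul_bdd hun.aestronglyMeasurable_of_compactSpace (.of_forall hbound)
  have herr : |∫ x, (g x - ψ x) * u (T^[n] x) ∂m| ≤ ε / 2 := by
    calc |∫ x, (g x - ψ x) * u (T^[n] x) ∂m|
        ≤ (∫ x, |g x - ψ x| ∂m) * B := abs_integral_mul_le hd hbound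
      _ ≤ ε / 2 / (B + 1) * (B + 1) := by gcongr; linarith
      _ = ε / 2 := by field_simp
  have hsplit : ∫ x, g x * u (T^[n] x) ∂m =
      ∫ x, (g x - ψ x) * u (T^[n] x) ∂m + ∫ x, ψ x * u (T^[n] x) ∂m := by
    rw [← integral_add hdu hψu]
    simp only [sub_mul, sub_add_cancel]
  have hmain := hN n hn
  rw [Real.dist_0_eq_abs] at hmain ⊢
  rw [hsplit]
  exact (abs_add_le _ _).trans_lt (by linarith)

end LogLipContraction

namespace IsACIP

variable {a b B : ℝ} {v f : α → ℝ}

theorem tendsto_integral_comp_iterate (hμ : IsACIP m T μ) (h : LogLipContraction m T L θ C)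
    (hu : Continuous u) :
    Tendsto (fun n => ∫ x, u (T^[n] x) ∂m) atTop (𝓝 (∫ x, u x ∂μ)) := by
  have := hμ.isProbabilityMeasure
  obtain ⟨B, hB⟩ := isCompact_univ.exists_bound_of_continuousOn hu.continuousOn
  set ρ : α → ℝ := fun x => (μ.rnDeriv m x).toReal
  have hρ : Integrable ρ m := Measure.integrable_toReal_rnDeriv
  have hρint : ∀ w : α → ℝ, ∫ x, ρ x * w x ∂m = ∫ x, w x ∂μ := fun w =>
    integral_rnDeriv_smul hμ.absolutelyContinuous
  have hzero : ∫ x, (ρ x - 1) ∂m = 0 := by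
    rw [integral_sub hρ (integrable_const _)]
    simpa [sub_eq_zero] using hρint fun _ => 1
  have hdiff : ∀ n, ∫ x, (ρ x - 1) * u (T^[n] x) ∂m = ∫ x, u x ∂μ - ∫ x, u (T^[n] x) ∂m :=
    fun n => by
      have hun : Continuous fun x => u (T^[n] x) := hu.comp (h.continuous.iterate n)
      have hρu : Integrable (fun x => ρ x * u (T^[n] x)) m :=
        hρ.mul_bdd hun.aestronglyMeasurable_of_compactSpace
          (.of_forall fun x => hB _ (mem_univ _))
      simp only [sub_mul, one_mul]
      rw [integral_sub hρu (integrable_of_continuous hun), hρint,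
        integral_comp_iterate_of_measurePreserving hμ.measurePreserving
          hu.aestronglyMeasurable_of_compactSpace]
  have hlim := h.tendsto_integral_mul_comp_iterate (hρ.sub (integrable_const 1)) hzero hu
  simp only [Pi.sub_apply, hdiff] at hlim
  simpa using hlim.const_sub (∫ x, u x ∂μ)

theorem abs_integral_comp_iterate_sub_le (hμ : IsACIP m T μ) (h : LogLipContraction m T L θ C)
    (ha : C / (1 - θ) < a) (hu : Continuous u) (hB : ∀ x, |u x| ≤ B) (n : ℕ) :
    |∫ x, u (T^[n] x) ∂m - ∫ x, u x ∂μ| ≤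
      2 * B * mixingRate (Metric.diam (univ : Set α)) θ C a ^ n := by
  have hone : LogLip a fun _ : α => (1 : ℝ) := .const (h.pos_of_lt ha).le zero_le_one
  have hle : ∀ N, |∫ x, u (T^[n] x) ∂m - ∫ x, u (T^[N + n] x) ∂m| ≤
      2 * B * mixingRate (Metric.diam (univ : Set α)) θ C a ^ n := fun N => by
    have hmass : ∫ x, L^[N] (fun _ => 1) x ∂m = 1 := by
      simpa using h.integral_iterate_mul ha.le hone (u := fun _ => 1) continuous_const N
    have hcompare := h.abs_integral_mul_comp_iterate_sub_le ha hone
      (h.logLip_iterate ha.le hone N) (by simp [hmass]) hu hB n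
    rw [h.integral_iterate_mul ha.le hone (u := fun x => u (T^[n] x))
      (hu.comp (h.continuous.iterate n))] at hcompare
    simpa [← Function.iterate_add_apply, add_comm n] using hcompare
  have hlim := (tendsto_add_atTop_iff_nat n).2 (hμ.tendsto_integral_comp_iterate h hu)
  exact le_of_tendsto' (hlim.const_sub _).abs hle

theorem abs_integral_mul_comp_iterate_sub_mul_le (hμ : IsACIP m T μ)
    (h : LogLipContraction m T L θ C) (hv : LogLip b v) (hb : 0 ≤ b) (ha : C / (1 - θ) + b < a)
    (hu : Continuous u) (hB : ∀ x, |u x| ≤ B) (n : ℕ) :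
    |∫ x, v x * u (T^[n] x) ∂μ - (∫ x, v x ∂μ) * ∫ x, u x ∂μ| ≤
      2 * B * (∫ x, v x ∂μ) * mixingRate (Metric.diam (univ : Set α)) θ C a ^ n := by
  have ha' : C / (1 - θ) < a := (le_add_of_nonneg_right hb).trans_lt ha
  have hun : Continuous fun x => u (T^[n] x) := hu.comp (h.continuous.iterate n)
  set φ : ℕ → α → ℝ := fun N => L^[N] fun _ => 1
  have hone : LogLip (C / (1 - θ)) fun _ : α => (1 : ℝ) :=
    .const (div_nonneg h.const_nonneg (sub_nonneg.2 h.rate_mem.2.le)) zero_le_one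
  have hφ : ∀ N, LogLip (C / (1 - θ)) (φ N) := h.logLip_iterate le_rfl hone
  have hφint : ∀ (w : α → ℝ), Continuous w → ∀ N, ∫ x, φ N x * w x ∂m = ∫ x, w (T^[N] x) ∂m :=
    fun w hw N => by simpa using h.integral_iterate_mul le_rfl hone hw N
  have hlim : ∀ w : α → ℝ, Continuous w →
      Tendsto (fun N => ∫ x, φ N x * w x ∂m) atTop (𝓝 (∫ x, w x ∂μ)) := fun w hw => by
    simpa only [hφint w hw] using hμ.tendsto_integral_comp_iterate h hw
  set M : ℕ → ℝ := fun N => ∫ x, φ N x * v x ∂m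
  have hM : ∀ N, 0 ≤ M N := fun N =>
    integral_nonneg fun x => mul_nonneg ((hφ N).nonneg x) (hv.nonneg x)
  have hmass : ∀ N, ∫ x, φ N x ∂m = 1 := fun N => by
    simpa using hφint (fun _ => 1) continuous_const N
  have hle : ∀ N, |∫ x, φ N x * (v x * u (T^[n] x)) ∂m - M N * ∫ x, φ N x * u (T^[n] x) ∂m| ≤
      2 * B * M N * mixingRate (Metric.diam (univ : Set α)) θ C a ^ n := fun N => by
    have hcompare := h.abs_integral_mul_comp_iterate_sub_le ha' (((hφ N).mul hv).mono ha.le)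
      (((hφ N).mono ha'.le).const_mul (hM N)) (by rw [integral_const_mul, hmass, mul_one])
      hu hB n
    simpa only [mul_assoc, integral_const_mul] using hcompare
  have hlhs := (hlim _ (hv.continuous.mul hun)).sub ((hlim v hv.continuous).mul (hlim _ hun))
  rw [← integral_comp_iterate_of_measurePreserving hμ.measurePreserving
    hu.aestronglyMeasurable_of_compactSpace n]
  exact le_of_tendsto_of_tendsto' hlhs.abs
    (((hlim v hv.continuous).const_mul (2 * B)).mul_const _) hle

theorem abs_covariance_comp_iterate_le (hμ : IsACIP m T μ) (h : LogLipContraction m T L θ C)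
    {K : NNReal} (hf : LipschitzWith K f) (hB : ∀ x, |f x| ≤ B) (ha : C / (1 - θ) + K < a)
    (k : ℕ) : |cov[f, f ∘ T^[k]; μ]| ≤
      2 * B * (2 * B + 1) * mixingRate (Metric.diam (univ : Set α)) θ C a ^ k := by
  have := hμ.isProbabilityMeasure
  obtain ⟨x₀⟩ : Nonempty α := μ.nonempty_of_neZero
  have hB0 : 0 ≤ B := (abs_nonneg _).trans (hB x₀)
  have hr := mixingRate_mem_Ioo (Metric.diam_nonneg (s := (univ : Set α))) h.rate_mem
    h.const_nonneg ((le_add_of_nonneg_right K.coe_nonneg).trans_lt ha)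
  have hfk : Continuous (f ∘ T^[k]) := hf.continuous.comp (h.continuous.iterate k)
  have hfint : Integrable f μ := integrable_of_continuous hf.continuous
  have hv : LogLip K fun x => f x + (B + 1) := by
    have hLip : LipschitzWith K fun x => f x + (B + 1) := by
      simpa using hf.add (LipschitzWith.const (B + 1))
    simpa only [div_one] using LogLip.of_lipschitzWith hLip one_pos fun x => by
      linarith [(abs_le.1 (hB x)).1]
  have hmean : ∫ x, (f x + (B + 1)) ∂μ ≤ 2 * B + 1 := by
    refine (integral_mono (hfint.add (integrable_const _)) (integrable_const (2 * B + 1))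
      fun x => ?_).trans_eq (by simp)
    simp only [Pi.add_apply]
    linarith [(abs_le.1 (hB x)).2]
  rw [← covariance_add_const_left hfint (B + 1),
    covariance_eq_sub (hv.continuous.memLp_of_hasCompactSupport (.of_compactSpace _))
      (hfk.memLp_of_hasCompactSupport (.of_compactSpace _))]
  simp only [Pi.mul_apply, Function.comp_apply, integral_comp_iterate_of_measurePreserving
    hμ.measurePreserving hf.continuous.aestronglyMeasurable_of_compactSpace]
  refine (hμ.abs_integral_mul_comp_iterate_sub_mul_le h hv K.coe_nonneg ha hf.continuous hB
    k).trans ?_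
  have := hr.1.le
  gcongr

end IsACIP

end InvariantMeasure

section GreenKubo

open ProbabilityTheory

variable {α : Type*} [MeasurableSpace α] {T : α → α} {μ : Measure α} {f : α → ℝ}

/-- The Green–Kubo series for the variance per unit time of the Birkhoff sums of `f` over a
`μ`-preserving map `T`. -/
noncomputable def greenKubo (T : α → α) (μ : Measure α) (f : α → ℝ) : ℝ :=
  Var[f; μ] + 2 * ∑' k : ℕ, cov[f, f ∘ T^[k + 1]; μ]

theorem memLp_birkhoffSum (hT : MeasurePreserving T μ μ) {p : ENNReal} (hf : MemLp f p μ) (n : ℕ) :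
    MemLp (birkhoffSum T f n) p μ :=
  memLp_finsetSum _ fun k _ => hf.comp_measurePreserving (hT.iterate k)

theorem integral_birkhoffSum (hT : MeasurePreserving T μ μ) (hf : Integrable f μ) (n : ℕ) :
    ∫ x, birkhoffSum T f n x ∂μ = n * ∫ x, f x ∂μ := by
  have hint : ∀ k ∈ Finset.range n, Integrable (fun x => f (T^[k] x)) μ := fun k _ =>
    (hT.iterate k).integrable_comp_of_integrable hf
  simp only [birkhoffSum]
  rw [integral_finsetSum _ hint]
  simp [integral_comp_iterate_of_measurePreserving hT hf.aestronglyMeasurable]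

theorem covariance_comp_iterate (hT : MeasurePreserving T μ μ) (hf : AEStronglyMeasurable f μ)
    (k : ℕ) : cov[f, f ∘ T^[k]; μ] =
      ∫ x, (f x - ∫ y, f y ∂μ) * (f (T^[k] x) - ∫ y, f y ∂μ) ∂μ := by
  simp only [covariance, Function.comp_apply, integral_comp_iterate_of_measurePreserving hT hf]

variable [IsFiniteMeasure μ]

theorem variance_birkhoffSum_succ (hT : MeasurePreserving T μ μ) (hf : MemLp f 2 μ) (n : ℕ) :
    Var[birkhoffSum T f (n + 1); μ] = Var[birkhoffSum T f n; μ] +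
      (Var[f; μ] + 2 * ∑ k ∈ Finset.range n, cov[f, f ∘ T^[k + 1]; μ]) := by
  have hB := memLp_birkhoffSum hT hf n
  have hsucc : birkhoffSum T f (n + 1) = f + birkhoffSum T f n ∘ T :=
    funext fun x => birkhoffSum_succ' T f n x
  have hcomp : birkhoffSum T f n ∘ T = ∑ k ∈ Finset.range n, f ∘ T^[k + 1] := by
    ext x
    simp [birkhoffSum, Finset.sum_apply]
  have hvar : Var[birkhoffSum T f n ∘ T; μ] = Var[birkhoffSum T f n; μ] :=
    hT.variance_fun_comp hB.aemeasurable
  have hcov : cov[f, birkhoffSum T f n ∘ T; μ] =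
      ∑ k ∈ Finset.range n, cov[f, f ∘ T^[k + 1]; μ] := by
    rw [hcomp]
    exact covariance_sum_right' (fun k _ => hf.comp_measurePreserving (hT.iterate (k + 1))) hf
  rw [hsucc, variance_add hf (hB.comp_measurePreserving hT), hvar, hcov]
  ring

theorem variance_birkhoffSum (hT : MeasurePreserving T μ μ) (hf : MemLp f 2 μ) (n : ℕ) :
    Var[birkhoffSum T f n; μ] = ∑ j ∈ Finset.range n,
      (Var[f; μ] + 2 * ∑ k ∈ Finset.range j, cov[f, f ∘ T^[k + 1]; μ]) := by
  induction n with
  | zero => simp [birkhoffSum_zero', variance_zero]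
  | succ n ih => rw [variance_birkhoffSum_succ hT hf, ih, Finset.sum_range_succ]

theorem tendsto_inv_mul_variance_birkhoffSum (hT : MeasurePreserving T μ μ) (hf : MemLp f 2 μ)
    (hsum : Summable fun k : ℕ => cov[f, f ∘ T^[k + 1]; μ]) :
    Tendsto (fun n : ℕ => (n : ℝ)⁻¹ * Var[birkhoffSum T f n; μ]) atTop (𝓝 (greenKubo T μ f)) := by
  simp only [variance_birkhoffSum hT hf]
  exact ((hsum.hasSum.tendsto_sum_nat.const_mul 2).const_add _).cesaro

theorem greenKubo_nonneg (hT : MeasurePreserving T μ μ) (hf : MemLp f 2 μ)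
    (hsum : Summable fun k : ℕ => cov[f, f ∘ T^[k + 1]; μ]) : 0 ≤ greenKubo T μ f :=
  ge_of_tendsto' (tendsto_inv_mul_variance_birkhoffSum hT hf hsum) fun n =>
    mul_nonneg (inv_nonneg.2 n.cast_nonneg) (variance_nonneg _ _)

theorem integral_inv_mul_sum_sub_sq (hT : MeasurePreserving T μ μ) (hf : MemLp f 2 μ) (n : ℕ) :
    ∫ x, (n : ℝ)⁻¹ * (∑ k ∈ Finset.range n, (f (T^[k] x) - ∫ y, f y ∂μ)) ^ 2 ∂μ =
      (n : ℝ)⁻¹ * Var[birkhoffSum T f n; μ] := by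
  rw [variance_eq_integral (memLp_birkhoffSum hT hf n).aemeasurable,
    integral_birkhoffSum hT (hf.integrable one_le_two), integral_const_mul]
  simp [birkhoffSum, Finset.sum_sub_distrib]

end GreenKubo

section ParameterDependence

open ProbabilityTheory

theorem continuous_uncurry_iterate {X α : Type*} [TopologicalSpace X] [TopologicalSpace α]
    {T : X → α → α} (hT : Continuous fun p : X × α => T p.1 p.2) (n : ℕ) :
    Continuous fun p : X × α => (T p.1)^[n] p.2 := by
  induction n with
  | zero => exact continuous_snd
  | succ n ih =>
    simp only [Function.iterate_succ_apply']
    exact hT.comp (continuous_fst.prodMk ih)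

variable {X : Type*} [TopologicalSpace X] [FirstCountableTopology X] {α : Type*}
  [PseudoMetricSpace α] [CompactSpace α] [MeasurableSpace α] [BorelSpace α] {m : Measure α}
  [IsProbabilityMeasure m] {T : X → α → α} {L : X → (α → ℝ) → α → ℝ} {θ C B : ℝ}
  {μ : X → Measure α} {f : α → ℝ}

theorem continuous_integral_isACIP (hT : Continuous fun p : X × α => T p.1 p.2)
    (h : ∀ t, LogLipContraction m (T t) (L t) θ C) (hμ : ∀ t, IsACIP m (T t) (μ t))
    {g : X → α → ℝ} (hg : Continuous fun p : X × α => g p.1 p.2) (hB : ∀ t x, |g t x| ≤ B) :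
    Continuous fun t => ∫ x, g t x ∂μ t := by
  rcases isEmpty_or_nonempty X with hX | ⟨⟨t₀⟩⟩
  · exact continuous_of_const fun t => hX.elim t
  obtain ⟨a, ha⟩ : ∃ a, C / (1 - θ) < a := exists_gt _
  have hr := mixingRate_mem_Ioo (Metric.diam_nonneg (s := (univ : Set α))) (h t₀).rate_mem
    (h t₀).const_nonneg ha
  have hgt : ∀ t, Continuous (g t) := fun t => hg.comp (continuous_const.prodMk continuous_id)
  have hgn : ∀ n, Continuous fun p : X × α => g p.1 ((T p.1)^[n] p.2) := fun n =>
    hg.comp (continuous_fst.prodMk (continuous_uncurry_iterate hT n))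
  have hcont : ∀ n, Continuous fun t => ∫ x, g t ((T t)^[n] x) ∂m := fun n =>
    continuous_of_dominated (bound := fun _ => B)
      (fun t => ((hgn n).comp (continuous_const.prodMk
        continuous_id)).aestronglyMeasurable_of_compactSpace)
      (fun t => .of_forall fun x => hB t _) (integrable_const _)
      (.of_forall fun x => (hgn n).comp (continuous_id.prodMk continuous_const))
  have hrate : Tendsto (fun n => 2 * B * mixingRate (Metric.diam (univ : Set α)) θ C a ^ n)
      atTop (𝓝 0) := by
    simpa using (tendsto_pow_atTop_nhds_zero_of_lt_one hr.1.le hr.2).const_mul (2 * B)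
  have hunif : TendstoUniformly (fun n t => ∫ x, g t ((T t)^[n] x) ∂m)
      (fun t => ∫ x, g t x ∂μ t) atTop := by
    refine Metric.tendstoUniformly_iff.2 fun ε hε => ?_
    filter_upwards [hrate.eventually_lt_const hε] with n hn t
    rw [dist_comm, Real.dist_eq]
    exact ((hμ t).abs_integral_comp_iterate_sub_le (h t) ha (hgt t) (hB t) n).trans_lt hn
  exact hunif.continuous (.of_forall hcont)

theorem continuous_covariance_comp_iterate (hT : Continuous fun p : X × α => T p.1 p.2)
    (h : ∀ t, LogLipContraction m (T t) (L t) θ C) (hμ : ∀ t, IsACIP m (T t) (μ t))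
    (hf : Continuous f) (k : ℕ) : Continuous fun t => cov[f, f ∘ (T t)^[k]; μ t] := by
  obtain ⟨B, hB⟩ := isCompact_univ.exists_bound_of_continuousOn hf.continuousOn
  have hB' : ∀ x, |f x| ≤ B := fun x => hB x (mem_univ x)
  have hmul : ∀ t x, |f x * f ((T t)^[k] x)| ≤ B * B := fun t x => by
    rw [abs_mul]
    exact mul_le_mul (hB' _) (hB' _) (abs_nonneg _) ((abs_nonneg _).trans (hB' x))
  have hcov : ∀ t, cov[f, f ∘ (T t)^[k]; μ t] =
      ∫ x, f x * f ((T t)^[k] x) ∂μ t - (∫ x, f x ∂μ t) * ∫ x, f x ∂μ t := fun t => by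
    have := (hμ t).isProbabilityMeasure
    rw [covariance_eq_sub (hf.memLp_of_hasCompactSupport (.of_compactSpace _))
      ((hf.comp ((h t).continuous.iterate k)).memLp_of_hasCompactSupport (.of_compactSpace _))]
    simp only [Pi.mul_apply, Function.comp_apply, integral_comp_iterate_of_measurePreserving
      (hμ t).measurePreserving hf.aestronglyMeasurable_of_compactSpace]
  simp only [hcov]
  have hmean : Continuous fun t => ∫ x, f x ∂μ t :=
    continuous_integral_isACIP hT h hμ (g := fun _ => f) (hf.comp continuous_snd) fun _ => hB'
  have hcorr : Continuous fun t => ∫ x, f x * f ((T t)^[k] x) ∂μ t :=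
    continuous_integral_isACIP hT h hμ
      ((hf.comp continuous_snd).mul (hf.comp (continuous_uncurry_iterate hT k))) hmul
  exact hcorr.sub (hmean.mul hmean)

theorem continuous_greenKubo (hT : Continuous fun p : X × α => T p.1 p.2)
    (h : ∀ t, LogLipContraction m (T t) (L t) θ C) (hμ : ∀ t, IsACIP m (T t) (μ t))
    (hf : Continuous f) {b : ℕ → ℝ} (hb : Summable b)
    (hcov : ∀ t k, |cov[f, f ∘ (T t)^[k + 1]; μ t]| ≤ b k) :
    Continuous fun t => greenKubo (T t) (μ t) f := by
  have hvar : Continuous fun t => Var[f; μ t] := by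
    simpa [covariance_self hf.measurable.aemeasurable] using
      continuous_covariance_comp_iterate hT h hμ hf 0
  have hseries := continuous_tsum
    (fun k => continuous_covariance_comp_iterate hT h hμ hf (k + 1)) hb fun k t => hcov t k
  exact hvar.add (hseries.const_mul 2)

end ParameterDependence

section Circle

instance : IsProbabilityMeasure (volume : Measure Circle1) := ⟨UnitAddCircle.measure_univ⟩

theorem exists_coe_eq_dist_eq {p : ℝ} (x y : AddCircle p) :
    ∃ s t : ℝ, (s : AddCircle p) = x ∧ (t : AddCircle p) = y ∧ dist s t = dist x y := by
  obtain ⟨s, rfl⟩ := QuotientAddGroup.mk_surjective x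
  obtain ⟨t, rfl⟩ := QuotientAddGroup.mk_surjective y
  refine ⟨s - round (p⁻¹ * (s - t)) * p, t, ?_, rfl, ?_⟩
  · rw [AddCircle.coe_sub, sub_eq_self, AddCircle.coe_eq_zero_iff]
    exact ⟨_, zsmul_eq_mul _ _⟩
  · rw [Real.dist_eq, dist_eq_norm, sub_right_comm]
    exact (AddCircle.norm_eq p).symm

theorem lipschitzWith_coe_addCircle (p : ℝ) : LipschitzWith 1 ((↑) : ℝ → AddCircle p) :=
  LipschitzWith.of_dist_le_mul fun x y => by
    rw [NNReal.coe_one, one_mul, dist_eq_norm, dist_eq_norm, ← AddCircle.coe_sub]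
    exact QuotientAddGroup.norm_mk_le_norm

theorem LogLip.of_comp_coe {p a : ℝ} {ψ : AddCircle p → ℝ}
    (hψ : LogLip a fun x : ℝ => ψ x) : LogLip a ψ where
  nonneg x := by
    obtain ⟨s, rfl⟩ := QuotientAddGroup.mk_surjective x
    exact hψ.nonneg s
  le_exp_mul x y := by
    obtain ⟨s, t, rfl, rfl, hst⟩ := exists_coe_eq_dist_eq x y
    simpa only [hst] using hψ.le_exp_mul s t

theorem coe_add_intCast (x : ℝ) (n : ℤ) : ((x + n : ℝ) : Circle1) = x := by
  rw [AddCircle.coe_add, add_eq_left, AddCircle.coe_eq_zero_iff]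
  exact ⟨n, by simp⟩

theorem exists_eq_add_intCast_of_coe_eq {x y : ℝ} (h : (x : Circle1) = y) :
    ∃ n : ℤ, x = y + n := by
  obtain ⟨n, hn⟩ := (AddCircle.coe_eq_zero_iff 1).1 ((AddCircle.coe_sub 1 x y).trans
    (sub_eq_zero.2 h))
  exact ⟨n, by simpa [sub_eq_iff_eq_add'] using hn.symm⟩

theorem intervalIntegral_sum_comp_add_natCast {v : ℝ → ℝ} (hv : Continuous v) (d : ℕ) :
    ∫ x in (0 : ℝ)..1, ∑ j ∈ Finset.range d, v (x + j) = ∫ x in (0 : ℝ)..d, v x := by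
  have hint : ∀ j ∈ Finset.range d, IntervalIntegrable (fun x => v (x + j)) volume 0 1 :=
    fun j _ => (hv.comp (continuous_add_const _)).intervalIntegrable _ _
  have hadj := intervalIntegral.sum_integral_adjacent_intervals (f := v) (μ := volume)
    (a := fun j : ℕ => (j : ℝ)) (n := d) fun k _ => hv.intervalIntegrable _ _
  rw [Nat.cast_zero] at hadj
  rw [intervalIntegral.integral_finsetSum hint, ← hadj]
  refine Finset.sum_congr rfl fun j _ => ?_
  rw [intervalIntegral.integral_comp_add_right, zero_add, Nat.cast_succ, add_comm]

end Circle

namespace CM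

variable {lam Astar : ℝ} (T : CM lam Astar)

theorem differentiable_lift : Differentiable ℝ T.F := T.contDiff.differentiable two_ne_zero

theorem differentiable_deriv_lift : Differentiable ℝ (deriv T.F) :=
  (contDiff_succ_iff_deriv (n := 1).1 T.contDiff).2.2.differentiable one_ne_zero

include T in
theorem nonneg_of_second_bound : 0 ≤ Astar := (abs_nonneg _).trans (T.second_bound 0)

theorem lift_add_intCast (x : ℝ) (n : ℤ) : T.F (x + n) = T.F x + n * T.deg := by
  have hper : Function.Periodic (fun x => T.F x - T.deg * x) 1 := fun x => by
    simp only [T.lift_add_one]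
    ring
  have hn := hper.int_mul n x
  simp only [mul_one] at hn
  linarith

theorem toMap_coe (x : ℝ) : T.toMap x = T.F x := by
  obtain ⟨n, hn⟩ := exists_eq_add_intCast_of_coe_eq
    (AddCircle.coe_equivIco (p := (1 : ℝ)) (a := 0) (y := x))
  rw [toMap, hn, lift_add_intCast]
  exact_mod_cast coe_add_intCast (T.F x) (n * T.deg)

theorem deriv_lift_add_intCast (x : ℝ) (n : ℤ) : deriv T.F (x + n) = deriv T.F x := by
  rw [← deriv_comp_add_const]
  simp only [lift_add_intCast, deriv_add_const]

theorem dmap_coe (x : ℝ) : T.dmap x = deriv T.F x := by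
  obtain ⟨n, hn⟩ := exists_eq_add_intCast_of_coe_eq
    (AddCircle.coe_equivIco (p := (1 : ℝ)) (a := 0) (y := x))
  rw [dmap, hn, deriv_lift_add_intCast]

theorem continuous_toMap : Continuous T.toMap := by
  refine QuotientAddGroup.isOpenQuotientMap_mk.isQuotientMap.continuous_iff.2 ?_
  have hcomp : T.toMap ∘ QuotientAddGroup.mk = fun x : ℝ => (T.F x : Circle1) :=
    funext T.toMap_coe
  rw [hcomp]
  exact (AddCircle.continuous_mk' 1).comp T.contDiff.continuous

variable {T}

section Inverse

variable (hlam : 0 < lam)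
include hlam

theorem deriv_lift_pos (x : ℝ) : 0 < deriv T.F x := hlam.trans_le (T.expanding x)

theorem strictMono_lift : StrictMono T.F := strictMono_of_deriv_pos (deriv_lift_pos hlam)

theorem deg_pos : 0 < T.deg := by
  have := strictMono_lift (T := T) hlam zero_lt_one
  have hdeg := T.lift_add_one 0
  rw [zero_add] at hdeg
  exact_mod_cast (by linarith : (0 : ℝ) < T.deg)

theorem natCast_toNat_deg : (T.deg.toNat : ℝ) = T.deg := by
  exact_mod_cast Int.toNat_of_nonneg (deg_pos hlam).le

theorem surjective_lift : Function.Surjective T.F := by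
  have hexp := mul_sub_le_image_sub_of_le_deriv T.differentiable_lift T.expanding
  refine T.contDiff.continuous.surjective ?_ ?_
  · refine tendsto_atTop_mono' atTop (f₁ := fun x => T.F 0 + lam * x) ?_
      (tendsto_atTop_add_const_left _ _ (tendsto_id.const_mul_atTop hlam))
    filter_upwards [eventually_ge_atTop 0] with x hx
    linarith [hexp hx]
  · refine tendsto_atBot_mono' atBot (f₁ := fun x => T.F 0 + lam * x) ?_
      (tendsto_atBot_add_const_left _ _ (tendsto_id.const_mul_atBot hlam))
    filter_upwards [eventually_le_atBot 0] with x hx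
    linarith [hexp hx]

variable (T) in
/-- The lift of `T` as an order automorphism of the line. -/
noncomputable def liftIso : ℝ ≃o ℝ :=
  (strictMono_lift (T := T) hlam).orderIsoOfSurjective T.F (surjective_lift hlam)

theorem lift_liftIso_symm (x : ℝ) : T.F ((T.liftIso hlam).symm x) = x :=
  (T.liftIso hlam).apply_symm_apply x

theorem liftIso_symm_lift (x : ℝ) : (T.liftIso hlam).symm (T.F x) = x :=
  (T.liftIso hlam).symm_apply_apply x

theorem liftIso_symm_add_intCast_mul_deg (x : ℝ) (n : ℤ) :
    (T.liftIso hlam).symm (x + n * T.deg) = (T.liftIso hlam).symm x + n := by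
  rw [OrderIso.symm_apply_eq]
  exact ((T.lift_add_intCast _ n).trans (by rw [lift_liftIso_symm])).symm

theorem lipschitzWith_liftIso_symm : LipschitzWith lam⁻¹.toNNReal (T.liftIso hlam).symm := by
  have hexp := mul_sub_le_image_sub_of_le_deriv T.differentiable_lift T.expanding
  have key : ∀ x y, x ≤ y → dist ((T.liftIso hlam).symm x) ((T.liftIso hlam).symm y) ≤
      lam⁻¹ * dist x y := fun x y hxy => by
    have hle := (T.liftIso hlam).symm.monotone hxy
    have := hexp hle
    rw [lift_liftIso_symm, lift_liftIso_symm] at this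
    rw [dist_comm, dist_comm x, Real.dist_eq, Real.dist_eq, abs_of_nonneg (sub_nonneg.2 hle),
      abs_of_nonneg (sub_nonneg.2 hxy), inv_mul_eq_div, le_div_iff₀' hlam]
    exact this
  refine LipschitzWith.of_dist_le' fun x y => ?_
  rcases le_total x y with hxy | hxy
  · exact key x y hxy
  · rw [dist_comm, dist_comm x]
    exact key y x hxy

theorem toMap_liftIso_symm_add_natCast (x : ℝ) (j : ℕ) :
    T.toMap ((T.liftIso hlam).symm (x + j) : ℝ) = x := by
  rw [toMap_coe, lift_liftIso_symm]
  exact_mod_cast coe_add_intCast x j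

variable (T) in
/-- The inverse branches of `T` at a point of the circle, with the lift `x` of that point: the
preimage number `j < deg T` is the projection of `F⁻¹ (x + j)`. -/
noncomputable def inverseBranch (x : ℝ) (j : Fin T.deg.toNat) : {y : Circle1 // T.toMap y = x} :=
  ⟨((T.liftIso hlam).symm (x + (j : ℕ)) : ℝ), toMap_liftIso_symm_add_natCast hlam x j⟩

theorem bijective_inverseBranch (x : ℝ) : Function.Bijective (T.inverseBranch hlam x) := by
  have hd : (T.deg.toNat : ℤ) = T.deg := Int.toNat_of_nonneg (deg_pos hlam).le
  constructor
  · intro i j hij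
    obtain ⟨n, hn⟩ := exists_eq_add_intCast_of_coe_eq (congrArg Subtype.val hij)
    rw [← liftIso_symm_add_intCast_mul_deg, (T.liftIso hlam).symm.injective.eq_iff] at hn
    have hij' : ((i : ℕ) : ℤ) = (j : ℕ) + n * T.deg := by
      exact_mod_cast (by linarith : ((i : ℕ) : ℝ) = (j : ℕ) + n * T.deg)
    have hmod := congrArg (· % T.deg) hij'
    simp only [Int.add_mul_emod_self_right] at hmod
    rw [Int.emod_eq_of_lt (by omega) (by omega), Int.emod_eq_of_lt (by omega) (by omega)] at hmod
    exact Fin.ext (by exact_mod_cast hmod)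
  · rintro ⟨y, hy⟩
    obtain ⟨s, rfl⟩ := QuotientAddGroup.mk_surjective y
    obtain ⟨n, hn⟩ := exists_eq_add_intCast_of_coe_eq ((T.toMap_coe s).symm.trans hy)
    have hmod_nonneg := Int.emod_nonneg n (deg_pos hlam (T := T)).ne'
    refine ⟨⟨(n % T.deg).toNat, ?_⟩, Subtype.ext ?_⟩
    · have := Int.emod_lt_of_pos n (deg_pos hlam (T := T))
      omega
    · have hcast : (((n % T.deg).toNat : ℕ) : ℝ) = n + (-(n / T.deg) : ℤ) * T.deg := by
        have := Int.emod_add_mul_ediv n T.deg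
        exact_mod_cast (by rw [Int.toNat_of_nonneg hmod_nonneg]; linarith :
          ((n % T.deg).toNat : ℤ) = n + -(n / T.deg) * T.deg)
      change (((T.liftIso hlam).symm (x + ((n % T.deg).toNat : ℕ)) : ℝ) : Circle1) = s
      rw [hcast, ← add_assoc, ← hn, liftIso_symm_add_intCast_mul_deg, liftIso_symm_lift,
        coe_add_intCast]

variable (T) in
/-- The contribution `ψ (F⁻¹ x) / F' (F⁻¹ x)` of one inverse branch to the transfer operator,
as a function on the line. -/
noncomputable def branchWeight (ψ : Circle1 → ℝ) (x : ℝ) : ℝ :=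
  ψ ((T.liftIso hlam).symm x : ℝ) / deriv T.F ((T.liftIso hlam).symm x)

theorem transfer_coe (ψ : Circle1 → ℝ) (x : ℝ) :
    transfer T ψ x = ∑ j ∈ Finset.range T.deg.toNat, T.branchWeight hlam ψ (x + j) := by
  rw [transfer, ← (Equiv.ofBijective _ (bijective_inverseBranch hlam x)).tsum_eq, tsum_fintype,
    Finset.sum_range]
  exact Finset.sum_congr rfl fun j _ => congrArg _ (T.dmap_coe _)

theorem continuous_branchWeight {ψ : Circle1 → ℝ} (hψ : Continuous ψ) :
    Continuous (T.branchWeight hlam ψ) :=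
  have hG : Continuous (T.liftIso hlam).symm := (T.liftIso hlam).symm.continuous
  ((hψ.comp (AddCircle.continuous_mk' 1)).comp hG).div
    (T.differentiable_deriv_lift.continuous.comp hG) fun _ => (deriv_lift_pos hlam _).ne'

theorem periodic_branchWeight (ψ : Circle1 → ℝ) :
    Function.Periodic (T.branchWeight hlam ψ) T.deg := fun x => by
  have hG := liftIso_symm_add_intCast_mul_deg (T := T) hlam x 1
  rw [Int.cast_one, one_mul] at hG
  simp only [branchWeight, hG, ← Int.cast_one (R := ℝ), coe_add_intCast, deriv_lift_add_intCast]

theorem logLip_deriv_lift : LogLip (Astar / lam) (deriv T.F) := by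
  have hbound : ∀ x, ‖deriv (deriv T.F) x‖₊ ≤ Astar.toNNReal := fun x =>
    NNReal.coe_le_coe.1 ((T.second_bound x).trans (Real.le_coe_toNNReal _))
  have := LogLip.of_lipschitzWith
    (lipschitzWith_of_nnnorm_deriv_le T.differentiable_deriv_lift hbound) hlam T.expanding
  rwa [Real.coe_toNNReal _ T.nonneg_of_second_bound] at this

theorem logLip_branchWeight {a : ℝ} (ha : 0 ≤ a) {ψ : Circle1 → ℝ} (hψ : LogLip a ψ) :
    LogLip (lam⁻¹ * a + Astar / lam ^ 2) (T.branchWeight hlam ψ) := by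
  have hψ' := (hψ.comp_lipschitzWith ha (lipschitzWith_coe_addCircle 1)).comp_lipschitzWith
    (mul_nonneg ha NNReal.zero_le_coe) (lipschitzWith_liftIso_symm (T := T) hlam)
  have hF' := ((logLip_deriv_lift (T := T) hlam).comp_lipschitzWith
    (div_nonneg T.nonneg_of_second_bound hlam.le) (lipschitzWith_liftIso_symm (T := T) hlam)).inv
    fun x => deriv_lift_pos hlam _
  have hmul := hψ'.mul hF'
  rw [NNReal.coe_one, mul_one, Real.coe_toNNReal _ (inv_nonneg.2 hlam.le)] at hmul
  have hconst : a * lam⁻¹ + Astar / lam * lam⁻¹ = lam⁻¹ * a + Astar / lam ^ 2 := by ring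
  have hfun : T.branchWeight hlam ψ = fun x => ψ ((T.liftIso hlam).symm x : ℝ) *
      (deriv T.F ((T.liftIso hlam).symm x))⁻¹ := funext fun x => div_eq_mul_inv _ _
  rwa [hconst, ← hfun] at hmul

theorem logLip_transfer {a : ℝ} (ha : 0 ≤ a) {ψ : Circle1 → ℝ} (hψ : LogLip a ψ) :
    LogLip (lam⁻¹ * a + Astar / lam ^ 2) (transfer T ψ) := by
  refine LogLip.of_comp_coe ?_
  simp only [transfer_coe hlam]
  refine LogLip.sum fun j _ => ?_
  have hw := (logLip_branchWeight (T := T) hlam ha hψ).comp_lipschitzWith (add_nonneg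
    (mul_nonneg (inv_nonneg.2 hlam.le) ha) (div_nonneg T.nonneg_of_second_bound (sq_nonneg _)))
    (isometry_add_right (j : ℝ)).lipschitz
  rwa [NNReal.coe_one, mul_one] at hw

theorem integral_transfer_mul {ψ u : Circle1 → ℝ} (hψ : Continuous ψ) (hu : Continuous u) :
    ∫ x, transfer T ψ x * u x = ∫ x, ψ x * u (T.toMap x) := by
  have hv : Continuous fun x : ℝ => T.branchWeight hlam ψ x * u x :=
    (continuous_branchWeight hlam hψ).mul (hu.comp (AddCircle.continuous_mk' 1))
  have hper : Function.Periodic (fun x : ℝ => T.branchWeight hlam ψ x * u x) T.deg := fun x => by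
    simp only [periodic_branchWeight hlam ψ x, coe_add_intCast]
  have hdeg := T.lift_add_one 0
  rw [zero_add] at hdeg
  calc ∫ x, transfer T ψ x * u x
      = ∫ x in (0 : ℝ)..1, transfer T ψ x * u x := by
        rw [← AddCircle.intervalIntegral_preimage 1 0, zero_add]
    _ = ∫ x in (0 : ℝ)..1, ∑ j ∈ Finset.range T.deg.toNat,
          T.branchWeight hlam ψ (x + j) * u ((x + j : ℝ) : Circle1) := by
        have hu_add : ∀ (x : ℝ) (j : ℕ), u ((x + j : ℝ) : Circle1) = u x := fun x j =>
          congrArg u (by exact_mod_cast coe_add_intCast x j)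
        simp only [transfer_coe hlam, Finset.sum_mul, hu_add]
    _ = ∫ x in T.F 0..T.F 1, T.branchWeight hlam ψ x * u x := by
        rw [intervalIntegral_sum_comp_add_natCast hv, natCast_toNat_deg hlam, hdeg,
          ← hper.intervalIntegral_add_eq 0, zero_add]
    _ = ∫ x in (0 : ℝ)..1, T.branchWeight hlam ψ (T.F x) * u (T.F x : ℝ) * deriv T.F x :=
        (intervalIntegral.integral_comp_mul_deriv
          (fun x _ => (T.differentiable_lift x).hasDerivAt)
          T.differentiable_deriv_lift.continuous.continuousOn hv).symm
    _ = ∫ x in (0 : ℝ)..1, ψ x * u (T.toMap x) := by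
        refine intervalIntegral.integral_congr fun x _ => ?_
        simp only [branchWeight, liftIso_symm_lift, toMap_coe]
        field_simp [(deriv_lift_pos (T := T) hlam x).ne']
    _ = ∫ x, ψ x * u (T.toMap x) := by
        rw [← AddCircle.intervalIntegral_preimage 1 0, zero_add]

end Inverse

theorem logLipContraction (hlam : 1 < lam) (T : CM lam Astar) :
    LogLipContraction volume T.toMap (transfer T) lam⁻¹ (Astar / lam ^ 2) where
  rate_mem := ⟨inv_pos.2 (zero_lt_one.trans hlam), inv_lt_one_of_one_lt₀ hlam⟩
  const_nonneg := div_nonneg T.nonneg_of_second_bound (sq_nonneg _)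
  continuous := T.continuous_toMap
  integral_mul _ _ hψ hu := integral_transfer_mul (zero_lt_one.trans hlam) hψ hu
  logLip _ _ ha hψ := logLip_transfer (zero_lt_one.trans hlam) ha hψ

end CM

section UniformDecay

open ProbabilityTheory

theorem exists_abs_covariance_comp_iterate_le {ι α : Type*} [PseudoMetricSpace α] [CompactSpace α]
    [MeasurableSpace α] [BorelSpace α] {m : Measure α} [IsProbabilityMeasure m] {T : ι → α → α}
    {L : ι → (α → ℝ) → α → ℝ} {θ C : ℝ} {μ : ι → Measure α} {K : NNReal} {f : α → ℝ}
    (h : ∀ t, LogLipContraction m (T t) (L t) θ C) (hμ : ∀ t, IsACIP m (T t) (μ t))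
    (hf : LipschitzWith K f) :
    ∃ A > 0, ∃ r ∈ Ioo (0 : ℝ) 1, ∀ t k, |cov[f, f ∘ (T t)^[k]; μ t]| ≤ A * r ^ k := by
  rcases isEmpty_or_nonempty ι with hι | ⟨⟨t₀⟩⟩
  · exact ⟨1, one_pos, 1 / 2, by norm_num, fun t => isEmptyElim t⟩
  obtain ⟨B, hB⟩ := isCompact_univ.exists_bound_of_continuousOn hf.continuous.continuousOn
  obtain ⟨a, ha⟩ : ∃ a, C / (1 - θ) + K < a := exists_gt _
  have hB' : ∀ x, |f x| ≤ max B 1 := fun x => (hB x (mem_univ x)).trans (le_max_left _ _)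
  have : 0 < max B 1 := one_pos.trans_le (le_max_right _ _)
  exact ⟨2 * max B 1 * (2 * max B 1 + 1), by positivity, _,
    mixingRate_mem_Ioo Metric.diam_nonneg (h t₀).rate_mem (h t₀).const_nonneg
      ((le_add_of_nonneg_right K.coe_nonneg).trans_lt ha),
    fun t k => (hμ t).abs_covariance_comp_iterate_le (h t) hf hB' ha k⟩

end UniformDecay

theorem dist_toMap_le_dC1 {lam Astar : ℝ} (T₁ T₂ : CM lam Astar) (x : Circle1) :
    dist (T₁.toMap x) (T₂.toMap x) ≤ dC1 T₁ T₂ :=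
  (le_ciSup (isCompact_range
    (T₁.continuous_toMap.dist T₂.continuous_toMap)).bddAbove x).trans
    (le_add_of_nonneg_right (Real.iSup_nonneg fun _ => abs_nonneg _))

theorem HolderCurve.continuousOn_toMap {lam Astar η : ℝ} (hη : 0 < η) {γ : ℝ → CM lam Astar}
    (hγ : HolderCurve η γ) :
    ContinuousOn (fun p : ℝ × Circle1 => (γ p.1).toMap p.2) (Icc 0 1 ×ˢ univ) := by
  obtain ⟨H, hH⟩ := hγ
  rintro ⟨t, x⟩ ⟨ht, -⟩
  have hlim : Tendsto (fun p : ℝ × Circle1 => (γ t).toMap p.2) (𝓝[Icc 0 1 ×ˢ univ] (t, x))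
      (𝓝 ((γ t).toMap x)) :=
    (((γ t).continuous_toMap.comp continuous_snd).tendsto (t, x)).mono_left nhdsWithin_le_nhds
  have hholder : Continuous fun p : ℝ × Circle1 => H * |p.1 - t| ^ η :=
    ((continuous_fst.sub continuous_const).abs.rpow_const fun _ => .inr hη.le).const_mul H
  have hzero := hholder.tendsto (t, x)
  simp only [sub_self, abs_zero, Real.zero_rpow hη.ne', mul_zero] at hzero
  refine hlim.congr_dist (squeeze_zero' (.of_forall fun _ => dist_nonneg) ?_
    (hzero.mono_left nhdsWithin_le_nhds))
  filter_upwards [self_mem_nhdsWithin] with p hp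
  rw [dist_comm]
  exact (dist_toMap_le_dC1 _ _ _).trans (hH _ hp.1 _ ht)

namespace IsSRBDensity

variable {lam Astar : ℝ} {T : CM lam Astar} {ρ : Circle1 → ℝ}

theorem integral_withDensity (hρ : IsSRBDensity T ρ) (g : Circle1 → ℝ) :
    ∫ x, g x ∂volume.withDensity (fun x => ENNReal.ofReal (ρ x)) = ∫ x, g x * ρ x := by
  rw [integral_withDensity_eq_integral_toReal_smul₀ hρ.1.1.aemeasurable.ennreal_ofReal
    (.of_forall fun x => ENNReal.ofReal_lt_top)]
  simp only [ENNReal.toReal_ofReal (hρ.1.2.2 _), smul_eq_mul, mul_comm]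

theorem isACIP (hρ : IsSRBDensity T ρ) :
    IsACIP volume T.toMap (volume.withDensity fun x => ENNReal.ofReal (ρ x)) where
  isProbabilityMeasure := ⟨by
    rw [withDensity_apply _ .univ, setLIntegral_univ, ← ofReal_integral_eq_lintegral_ofReal hρ.1.1
      (.of_forall hρ.1.2.2), hρ.1.2.1, ENNReal.ofReal_one]⟩
  measurePreserving := ⟨T.continuous_toMap.measurable, hρ.2.2⟩
  absolutelyContinuous := withDensity_absolutelyContinuous _ _

end IsSRBDensity

section General

open ProbabilityTheory

theorem statement11_general {X : Type*} [UniformSpace X] [FirstCountableTopology X] {S : Set X}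
    (hS : IsCompact S) {α : Type*} [PseudoMetricSpace α] [CompactSpace α] [MeasurableSpace α]
    [BorelSpace α] {m : Measure α} [IsProbabilityMeasure m] {T : X → α → α}
    (hT : ContinuousOn (fun p : X × α => T p.1 p.2) (S ×ˢ univ)) {L : X → (α → ℝ) → α → ℝ}
    {θ C : ℝ} (h : ∀ t ∈ S, LogLipContraction m (T t) (L t) θ C) {μ : X → Measure α}
    (hμ : ∀ t ∈ S, IsACIP m (T t) (μ t)) {f : α → ℝ} (hf : ∃ K : NNReal, LipschitzWith K f) :
    ∃ σ2 : X → ℝ,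
      (∀ t ∈ S, Tendsto (fun n : ℕ => ∫ x, (n : ℝ)⁻¹ *
        (∑ k ∈ Finset.range n, (f ((T t)^[k] x) - ∫ y, f y ∂μ t)) ^ 2 ∂μ t) atTop (𝓝 (σ2 t))) ∧
      (∀ t ∈ S, σ2 t = ∫ x, (f x - ∫ y, f y ∂μ t) ^ 2 ∂μ t + 2 * ∑' k : ℕ,
        ∫ x, (f x - ∫ y, f y ∂μ t) * (f ((T t)^[k + 1] x) - ∫ y, f y ∂μ t) ∂μ t) ∧
      (∃ A > 0, ∃ r ∈ Ioo (0 : ℝ) 1, ∀ t ∈ S, ∀ k : ℕ,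
        |∫ x, (f x - ∫ y, f y ∂μ t) * (f ((T t)^[k + 1] x) - ∫ y, f y ∂μ t) ∂μ t| ≤
          A * r ^ (k + 1)) ∧
      (∀ t ∈ S, 0 ≤ σ2 t) ∧ UniformContinuousOn σ2 S := by
  obtain ⟨K, hf⟩ := hf
  obtain ⟨A, hA, r, hr, hcov⟩ := exists_abs_covariance_comp_iterate_le (ι := S)
    (fun t => h t t.2) (fun t => hμ t t.2) hf
  have hgeom : Summable fun k => A * r ^ (k + 1) :=
    ((summable_nat_add_iff 1).2 (summable_geometric_of_lt_one hr.1.le hr.2)).mul_left A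
  have hfint : ∀ t ∈ S, MemLp f 2 (μ t) := fun t ht =>
    have := (hμ t ht).isProbabilityMeasure
    hf.continuous.memLp_of_hasCompactSupport (.of_compactSpace _)
  have hsum : ∀ t ∈ S, Summable fun k : ℕ => cov[f, f ∘ (T t)^[k + 1]; μ t] := fun t ht =>
    .of_norm_bounded hgeom fun k => hcov ⟨t, ht⟩ (k + 1)
  have hcov_eq := fun t ht => covariance_comp_iterate (hμ t ht).measurePreserving
    (hfint t ht).aestronglyMeasurable
  refine ⟨fun t => greenKubo (T t) (μ t) f, fun t ht => ?_, fun t ht => ?_,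
    ⟨A, hA, r, hr, fun t ht k => ?_⟩, fun t ht => ?_, ?_⟩
  · have := (hμ t ht).isProbabilityMeasure
    simp only [integral_inv_mul_sum_sub_sq (hμ t ht).measurePreserving (hfint t ht)]
    exact tendsto_inv_mul_variance_birkhoffSum (hμ t ht).measurePreserving (hfint t ht) (hsum t ht)
  · simp only [greenKubo, variance_eq_integral (hfint t ht).aemeasurable, hcov_eq t ht]
  · rw [← hcov_eq t ht]
    exact hcov ⟨t, ht⟩ (k + 1)
  · have := (hμ t ht).isProbabilityMeasure
    exact greenKubo_nonneg (hμ t ht).measurePreserving (hfint t ht) (hsum t ht)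
  · have hT' : Continuous fun p : S × α => T p.1 p.2 :=
      hT.comp_continuous (continuous_subtype_val.prodMap continuous_id) fun p => ⟨p.1.2, mem_univ _⟩
    exact hS.uniformContinuousOn_of_continuous <| continuousOn_iff_continuous_domRestrict.2 <|
      continuous_greenKubo hT' (fun t => h t t.2) (fun t => hμ t t.2) hf.continuous hgeom
        fun t k => hcov t (k + 1)

end General

/-- Lemma `lem:sigma`.  For each `t ∈ [0,1]` the limit variance
`σ̂ₜ²(f) = lim_m μ̂ₜ[(m^{−1/2} Σ_{k<m} f̂ₜ∘γₜᵏ)²]` exists and equals the Green–Kubo series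
`μ̂ₜ(f̂ₜ²) + 2Σ_{k≥1} μ̂ₜ(f̂ₜ·(f̂ₜ∘γₜᵏ))`, which converges absolutely at an exponential rate;
moreover `t ↦ σ̂ₜ²(f)` is nonnegative and uniformly continuous on `[0,1]`. -/
theorem statement11 {lam Astar : ℝ} (hlam : 1 < lam) (hA : 0 < Astar)
    {η : ℝ} (hη : η ∈ Set.Ioo (0 : ℝ) 1)
    (γ : ℝ → CM lam Astar) (hγ : HolderCurve η γ)
    (f : Circle1 → ℝ) (hf : ∃ K : NNReal, LipschitzWith K f)
    (ρhat : ℝ → Circle1 → ℝ) (hρhat : ∀ t ∈ Set.Icc (0 : ℝ) 1, IsSRBDensity (γ t) (ρhat t)) :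
    ∃ σ2 : ℝ → ℝ,
      (∀ t ∈ Set.Icc (0 : ℝ) 1,
        Tendsto (fun m : ℕ => ∫ x : Circle1,
            ((m : ℝ)⁻¹ * (∑ k ∈ Finset.range m,
              (f ((γ t).toMap^[k] x) - ∫ y : Circle1, f y * ρhat t y)) ^ 2) * ρhat t x)
          atTop (𝓝 (σ2 t))) ∧
      (∀ t ∈ Set.Icc (0 : ℝ) 1,
        σ2 t = (∫ x : Circle1, (f x - ∫ y : Circle1, f y * ρhat t y) ^ 2 * ρhat t x) +
          2 * ∑' k : ℕ, ∫ x : Circle1,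
            ((f x - ∫ y : Circle1, f y * ρhat t y) *
              (f ((γ t).toMap^[k+1] x) - ∫ y : Circle1, f y * ρhat t y)) * ρhat t x) ∧
      (∃ Ce : ℝ, 0 < Ce ∧ ∃ θ : ℝ, θ ∈ Set.Ioo (0 : ℝ) 1 ∧
        ∀ t ∈ Set.Icc (0 : ℝ) 1, ∀ k : ℕ,
          |∫ x : Circle1,
            ((f x - ∫ y : Circle1, f y * ρhat t y) *
              (f ((γ t).toMap^[k+1] x) - ∫ y : Circle1, f y * ρhat t y)) * ρhat t x| ≤
            Ce * θ ^ (k + 1)) ∧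
      (∀ t ∈ Set.Icc (0 : ℝ) 1, 0 ≤ σ2 t) ∧
      (∀ ε : ℝ, 0 < ε → ∃ δ : ℝ, 0 < δ ∧
        ∀ s ∈ Set.Icc (0 : ℝ) 1, ∀ t ∈ Set.Icc (0 : ℝ) 1, |s - t| < δ →
          |σ2 s - σ2 t| < ε) := by
  obtain ⟨σ2, hlim, hseries, ⟨A, hA, r, hr, hdecay⟩, hnonneg, hunif⟩ :=
    statement11_general isCompact_Icc (hγ.continuousOn_toMap hη.1)
      (fun t _ => (γ t).logLipContraction hlam) (fun t ht => (hρhat t ht).isACIP) hf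
  have hint := fun t ht => (hρhat t ht).integral_withDensity
  refine ⟨σ2, fun t ht => ?_, fun t ht => ?_, ⟨A, hA, r, hr, fun t ht k => ?_⟩, hnonneg,
    Metric.uniformContinuousOn_iff.1 hunif⟩
  · simpa only [hint t ht] using hlim t ht
  · simpa only [hint t ht] using hseries t ht
  · simpa only [hint t ht] using hdecay t ht k
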